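/- Under the hypotheses of the parameterized double character sum theorem, for any η with 0 < η ≤ 1, the bound Σ_{y∈T} |Σ_{s∈S} χ_a(s+y)χ_b(s+A(y))| < η·|T|·|S| holds whenever |T| ≥ (2r)⁴·q^{1/r} and |S| ≥ 4r·q^{1/2}/η^{2r}. -/

import Mathlib

section Helpers

section
open Polynomial
lemma kummer_ndvd {K : Type*} [Field K] {n : ℕ} (hn : 0 < n) {ζ : K} (hζ : IsPrimitiveRoot ζ n)
    (Z : Finset K) (e : K → ℕ) (hcop : ∀ m : ℕ, (∀ z ∈ Z, n ∣ m * e z) → n ∣ m)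
    (a : K) (ha : a ≠ 0) (f : K[X]) (hf : f = ∏ z ∈ Z, (X - C z) ^ e z) (m : ℕ)
    (u v : K[X]) (hu : u ≠ 0) (hv : v ≠ 0) (b : K) (hb : b ≠ 0) (h : u ^ n * f ^ m = C b * v ^ n) :
    n ∣ m := by
  classical
  apply hcop
  intro z hz
  have hf0 : f ≠ 0 := by
    rw [hf]; exact Finset.prod_ne_zero_iff.2 fun z _ => pow_ne_zero _ (X_sub_C_ne_zero z)
  have hfz : f.rootMultiplicity z = e z := by
    rw [← count_roots, hf, roots_prod _ _ (hf ▸ hf0), Multiset.count_bind]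
    simp only [roots_pow, roots_X_sub_C, Multiset.count_nsmul, Multiset.count_singleton]
    rw [Finset.sum_map_val, Finset.sum_eq_single z]
    · simp
    · intro b _ hb; simp [hb.symm]
    · intro h; exact absurd hz h
  have hpow : ∀ (g : K[X]) (k : ℕ), rootMultiplicity z (g ^ k) = k * rootMultiplicity z g := by
    intro g k
    rw [← count_roots, roots_pow, Multiset.count_nsmul, count_roots]
  have h1 := congrArg (rootMultiplicity z) h
  rw [rootMultiplicity_mul (mul_ne_zero (pow_ne_zero _ hu) (pow_ne_zero _ hf0)),
    rootMultiplicity_mul (mul_ne_zero (C_ne_zero.2 hb) (pow_ne_zero _ hv)), rootMultiplicity_C,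
    hpow, hpow, hpow, hfz] at h1
  have : n ∣ n * rootMultiplicity z u + m * e z := ⟨rootMultiplicity z v, by rw [h1]; ring⟩
  exact (Nat.dvd_add_right (dvd_mul_right _ _)).1 this

lemma kummer_irr {K : Type*} [Field K] {n : ℕ} (hn : 0 < n) {ζ : K} (hζ : IsPrimitiveRoot ζ n)
    (Z : Finset K) (e : K → ℕ) (hcop : ∀ m : ℕ, (∀ z ∈ Z, n ∣ m * e z) → n ∣ m)
    (a : K) (ha : a ≠ 0) (f : K[X]) (hf : f = ∏ z ∈ Z, (X - C z) ^ e z) :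
    Irreducible (X ^ n - C (algebraMap K[X] (FractionRing K[X]) (C a) / algebraMap K[X] (FractionRing K[X]) f)) := by
  classical
  set L := FractionRing K[X]
  set Ω := AlgebraicClosure L
  set c : L := algebraMap K[X] L (C a) / algebraMap K[X] L f with hc
  have hf0 : f ≠ 0 := by
    rw [hf]; exact Finset.prod_ne_zero_iff.2 fun z _ => pow_ne_zero _ (X_sub_C_ne_zero z)
  have hfL : algebraMap K[X] L f ≠ 0 := by
    simpa using hf0
  have haL : algebraMap K[X] L (C a) ≠ 0 := by
    simpa using ha
  have hc0 : c ≠ 0 := div_ne_zero haL hfL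
  obtain ⟨τ, hτ⟩ := IsAlgClosed.exists_pow_nat_eq (algebraMap L Ω c) hn
  have hτ0 : τ ≠ 0 := by
    rintro rfl
    rw [zero_pow hn.ne'] at hτ
    exact hc0 ((map_eq_zero _).1 hτ.symm)
  have hint : IsIntegral L τ := Algebra.IsIntegral.isIntegral τ
  set p := minpoly L τ with hp
  have hpd : p ∣ X ^ n - C c := minpoly.dvd _ _ (by simp [hτ])
  have hmon : (X ^ n - C c).Monic := monic_X_pow_sub_C c hn.ne'
  have hpm : p.Monic := minpoly.monic hint
  -- all roots
  have hsp : (p.map (algebraMap L Ω)).Splits := IsAlgClosed.splits _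
  have hζL : IsPrimitiveRoot (algebraMap K[X] L (C ζ)) n := by
    have := hζ.map_of_injective (f := (algebraMap K[X] L).comp C)
      ((IsFractionRing.injective K[X] L).comp C_injective)
    simpa using this
  have hζΩ := hζL.map_of_injective (algebraMap L Ω).injective
  have hroot : ∀ t ∈ (p.map (algebraMap L Ω)).roots, ∃ y : L, t = τ * algebraMap L Ω y := by
    intro t ht
    have ht' : (p.map (algebraMap L Ω)).IsRoot t := (mem_roots'.1 ht).2
    have h2 : ((X ^ n - C c).map (algebraMap L Ω)).IsRoot t :=
      ht'.dvd (Polynomial.map_dvd _ hpd)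
    simp only [IsRoot.def, Polynomial.map_sub, Polynomial.map_pow, map_X, map_C, eval_sub, eval_pow, eval_X, eval_C] at h2
    have h3 : (t / τ) ^ n = 1 := by
      rw [div_pow, hτ, sub_eq_zero.1 h2, div_self]
      simpa using hc0
    have : NeZero n := ⟨hn.ne'⟩
    obtain ⟨i, _, hi⟩ := hζΩ.eq_pow_of_pow_eq_one h3
    refine ⟨(algebraMap K[X] L (C ζ)) ^ i, ?_⟩
    rw [map_pow, hi, mul_div_cancel₀ _ hτ0]
  have hprod : ∀ s : Multiset Ω, (∀ t ∈ s, ∃ y : L, t = τ * algebraMap L Ω y) →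
      ∃ y : L, s.prod = τ ^ (Multiset.card s) * algebraMap L Ω y := by
    intro s
    induction s using Multiset.induction with
    | empty => intro _; exact ⟨1, by simp⟩
    | cons t s ih =>
      intro h
      obtain ⟨y, hy⟩ := ih fun t ht => h t (Multiset.mem_cons_of_mem ht)
      obtain ⟨y', hy'⟩ := h t (Multiset.mem_cons_self _ _)
      exact ⟨y' * y, by rw [Multiset.prod_cons, hy, hy', Multiset.card_cons, map_mul]; ring⟩
  obtain ⟨y, hy⟩ := hprod _ hroot
  have hcard : Multiset.card (p.map (algebraMap L Ω)).roots = p.natDegree := by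
    rw [← hsp.natDegree_eq_card_roots, natDegree_map]
  have hcoeff := hsp.coeff_zero_eq_prod_roots_of_monic (hpm.map _)
  rw [hy, hcard, natDegree_map, coeff_map] at hcoeff
  set m := p.natDegree
  have hp0 : p.coeff 0 ≠ 0 := minpoly.coeff_zero_ne_zero hint hτ0
  have hyL : y ≠ 0 := by
    rintro rfl
    apply hp0
    apply (algebraMap L Ω).injective
    rw [hcoeff]; simp
  -- τ ^ m in L
  obtain ⟨w, hw⟩ : ∃ w : L, τ ^ m = algebraMap L Ω w := by
    refine ⟨(-1) ^ m * p.coeff 0 / y, ?_⟩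
    have : algebraMap L Ω y ≠ 0 := by simpa using hyL
    rw [map_div₀, map_mul, hcoeff, map_pow, map_neg, map_one]
    rw [eq_div_iff this, ← mul_assoc, ← mul_pow, neg_one_mul, neg_neg, one_pow, one_mul]
  have hw0 : w ≠ 0 := by
    rintro rfl
    rw [map_zero] at hw
    exact hτ0 (eq_zero_of_pow_eq_zero hw)
  have hwn : w ^ n = c ^ m := by
    apply (algebraMap L Ω).injective
    rw [map_pow, map_pow, ← hw, ← hτ, ← pow_mul, ← pow_mul, mul_comm]
  obtain ⟨u, v, hv, huv⟩ := IsFractionRing.div_surjective (A := K[X]) w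
  have hv0 : v ≠ 0 := nonZeroDivisors.ne_zero hv
  have hvL : algebraMap K[X] L v ≠ 0 := by simpa using hv0
  have hu0 : u ≠ 0 := by
    rintro rfl
    apply hw0; rw [← huv]; simp
  have key : u ^ n * f ^ m = C (a ^ m) * v ^ n := by
    apply IsFractionRing.injective K[X] L
    rw [← huv, hc, div_pow, div_pow, div_eq_div_iff (pow_ne_zero _ hvL) (pow_ne_zero _ hfL)] at hwn
    simp only [map_mul, map_pow] 
    rw [hwn]
  have hnm := kummer_ndvd hn hζ Z e hcop a ha f hf m u v hu0 hv0 (a ^ m) (pow_ne_zero _ ha) key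
  have hle : n ≤ m := Nat.le_of_dvd (minpoly.natDegree_pos hint) hnm
  have : X ^ n - C c = p := by
    refine (Polynomial.eq_of_monic_of_dvd_of_natDegree_le hpm hmon hpd ?_)
    rw [natDegree_X_pow_sub_C]; exact hle
  rw [this]
  exact minpoly.irreducible hint

lemma natDegree_det_le' {K : Type*} [Field K] {N : ℕ} (A : Matrix (Fin N) (Fin N) K[X]) (B : ℕ)
    (h : ∀ i j, (A i j).natDegree ≤ B) : A.det.natDegree ≤ N * B := by
  rw [Matrix.det_apply]
  refine natDegree_sum_le_of_forall_le _ _ fun σ _ => ?_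
  refine (natDegree_smul_le _ _).trans ?_
  refine (natDegree_prod_le _ _).trans ?_
  refine (Finset.sum_le_sum (fun i _ => h _ _)).trans ?_
  simp

lemma nonvan {K : Type*} [Field K] {n : ℕ} (hn : 0 < n) {ζ : K} (hζ : IsPrimitiveRoot ζ n)
    (Z : Finset K) (e : K → ℕ) (hcop : ∀ m : ℕ, (∀ z ∈ Z, n ∣ m * e z) → n ∣ m)
    (a : K) (ha : a ≠ 0) (f : K[X]) (hf : f = ∏ z ∈ Z, (X - C z) ^ e z) (M B : ℕ)
    (hB : 2 * n * B < M) (hfB : f.natDegree ≤ B) (h : K[X][X]) (h0 : h ≠ 0)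
    (hhn : h.natDegree < n) (hhB : ∀ i, (h.coeff i).natDegree ≤ B) (G : K[X])
    (hG : X ^ M ∣ f * G ^ n - C a) : ¬ X ^ M ∣ h.eval G := by
  classical
  intro hdiv
  set L := FractionRing K[X]
  have hf0 : f ≠ 0 := by
    rw [hf]; exact Finset.prod_ne_zero_iff.2 fun z _ => pow_ne_zero _ (X_sub_C_ne_zero z)
  set g : K[X][X] := C f * X ^ n - C (C a) with hg
  have hgdeg : g.natDegree = n := by
    rw [hg, natDegree_sub_C, natDegree_C_mul_X_pow n f hf0]
  obtain ⟨p, q, -, -, hpq⟩ := exists_mul_add_mul_eq_C_resultant h g le_rfl hgdeg.le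
    (Or.inr hn.ne')
  set R := h.resultant g h.natDegree n with hR
  have hRd : X ^ M ∣ R := by
    have := congrArg (eval G) hpq
    rw [eval_C, eval_add, eval_mul, eval_mul] at this
    rw [← this]
    refine dvd_add (dvd_mul_of_dvd_left hdiv _) (dvd_mul_of_dvd_left ?_ _)
    simpa [hg] using hG
  have hgB : ∀ i, (g.coeff i).natDegree ≤ B := by
    intro i
    rw [hg, coeff_sub, coeff_C_mul, coeff_X_pow, coeff_C]
    refine (natDegree_sub_le _ _).trans (max_le ?_ ?_)
    · split_ifs <;> simp [hfB]
    · split_ifs <;> simp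
  have hRdeg : R.natDegree < M := by
    refine lt_of_le_of_lt (natDegree_det_le' _ B ?_) (lt_of_le_of_lt (Nat.mul_le_mul_right B ?_) hB)
    · intro i j
      rw [sylvester, Matrix.of_apply]
      induction j using Fin.addCases with
      | left j => rw [Fin.addCases_left]; split_ifs <;> simp [hgB]
      | right j => rw [Fin.addCases_right]; split_ifs <;> simp [hhB]
    · omega
  have hR0 : R = 0 := by
    by_contra hne
    have := natDegree_le_of_dvd hRd hne
    rw [natDegree_X_pow] at this
    omega
  have hinj := IsFractionRing.injective K[X] L
  have h1 : resultant (h.map (algebraMap K[X] L)) (g.map (algebraMap K[X] L)) = 0 := by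
    rw [natDegree_map_eq_of_injective hinj, natDegree_map_eq_of_injective hinj, hgdeg,
      resultant_map_map, ← hR, hR0, map_zero]
  have h2 := (resultant_eq_zero_iff.1 h1).2
  apply h2
  have hirr := kummer_irr hn hζ Z e hcop a ha f hf
  have hfL : algebraMap K[X] L f ≠ 0 := fun hh => hf0 (hinj (by rw [hh, map_zero]))
  have hgmap : g.map (algebraMap K[X] L) = C (algebraMap K[X] L f) *
      (X ^ n - C (algebraMap K[X] L (C a) / algebraMap K[X] L f)) := by
    rw [hg, mul_sub, ← C_mul, mul_div_cancel₀ _ hfL]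
    simp
  rw [hgmap]
  refine IsCoprime.mul_right ?_ ?_
  · exact ⟨0, C (algebraMap K[X] L f)⁻¹, by rw [zero_mul, zero_add, ← C_mul, inv_mul_cancel₀ hfL, C_1]⟩
  · refine ((hirr.coprime_iff_not_dvd).2 fun hd => ?_).symm
    have := natDegree_le_of_dvd hd (by
      rwa [Ne, Polynomial.map_eq_zero_iff hinj])
    rw [natDegree_X_pow_sub_C, natDegree_map_eq_of_injective hinj] at this
    omega

lemma nonvan2 {K : Type*} [Field K] {n : ℕ} (hn : 0 < n) {ζ : K} (hζ : IsPrimitiveRoot ζ n)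
    (Z : Finset K) (e : K → ℕ) (hcop : ∀ m : ℕ, (∀ z ∈ Z, n ∣ m * e z) → n ∣ m)
    (a : K) (ha : a ≠ 0) (f : K[X]) (hf : f = ∏ z ∈ Z, (X - C z) ^ e z) (M B J : ℕ)
    (hB : 2 * n * B < M) (hfB : f.natDegree ≤ B) (h : ℕ → K[X][X]) (h0 : ∃ i < J, h i ≠ 0)
    (hhn : ∀ i, (h i).natDegree < n) (hhB : ∀ k i, ((h k).coeff i).natDegree ≤ B) (G : K[X])
    (hG : X ^ M ∣ f * G ^ n - C a) :
    ∑ i ∈ Finset.range J, (h i).eval G * X ^ (M * i) ≠ 0 := by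
  classical
  intro hE
  set i0 := Nat.find h0
  obtain ⟨hi0, hne⟩ := Nat.find_spec h0
  have hmin : ∀ i < i0, h i = 0 := by
    intro i hi
    have := Nat.find_min h0 hi
    by_contra hcon
    exact this ⟨hi.trans hi0, hcon⟩
  apply nonvan hn hζ Z e hcop a ha f hf M B hB hfB (h i0) hne (hhn _) (hhB _) G hG
  rw [Finset.range_eq_Ico, ← Finset.sum_Ico_consecutive _ (Nat.zero_le i0) hi0.le,
    Finset.sum_eq_zero (s := Finset.Ico 0 i0), zero_add, Finset.sum_eq_sum_Ico_succ_bot hi0] at hE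
  · have hd : X ^ (M * (i0 + 1)) ∣ ∑ i ∈ Finset.Ico (i0 + 1) J, (h i).eval G * X ^ (M * i) := by
      refine Finset.dvd_sum fun i hi => dvd_mul_of_dvd_right (pow_dvd_pow _ ?_) _
      exact Nat.mul_le_mul_left _ (Finset.mem_Ico.1 hi).1
    have h3 : X ^ (M * (i0 + 1)) ∣ (h i0).eval G * X ^ (M * i0) := by
      rw [eq_neg_of_add_eq_zero_left hE]
      exact (dvd_neg).2 hd
    rw [mul_add, mul_one, pow_add, mul_comm ((h i0).eval G)] at h3
    exact (mul_dvd_mul_iff_left (pow_ne_zero _ X_ne_zero)).1 h3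
  · intro i hi
    rw [hmin i (Finset.mem_Ico.1 hi).2]; simp
end

section
open Polynomial
lemma stepanov_aux {K : Type*} [Field K] [Fintype K] (p t : ℕ) [Fact p.Prime] [CharP K p]
    (M : ℕ) (hM : M = p ^ t) (hQ : Fintype.card K = M ^ 2)
    {n : ℕ} (hn : 0 < n) (hnM : n ∣ M - 1) {ζ₀ : K} (hζ₀ : IsPrimitiveRoot ζ₀ n)
    (Z : Finset K) (e : K → ℕ) (hcop : ∀ m : ℕ, (∀ z ∈ Z, n ∣ m * e z) → n ∣ m)
    (f : K[X]) (hf : f = ∏ z ∈ Z, (X - C z) ^ e z) (hf00 : f.eval 0 ≠ 0)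
    (ζ : K) (hζ : ζ ≠ 0) (B J : ℕ) (hB : 2 * n * B < M) (hfB : f.natDegree ≤ B)
    (hcount : B * M + J + f.natDegree * M < n * J * B)
    (V : Finset K) (hV : ∀ x ∈ V, f.eval x ^ ((M ^ 2 - 1) / n) = ζ) :
    V.card ≤ B + J * M + f.natDegree * M := by
  classical
  obtain ⟨s, hs⟩ := hnM
  have hMpos : 0 < M := by omega
  have hs1 : n * s + 1 = M := by omega
  have hsM : (M ^ 2 - 1) / n = s * (M + 1) := by
    have : M ^ 2 - 1 = n * (s * (M + 1)) := by
      have h1 : M ^ 2 - 1 = (M + 1) * (M - 1) := by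
        simpa using Nat.sq_sub_sq M 1
      rw [h1, hs]; ring
    rw [this, Nat.mul_div_cancel_left _ hn]
  rw [hsM] at hV
  set m := f.natDegree with hm
  set G := f ^ s with hG
  have hGdeg : G.natDegree = s * m := by rw [hG, natDegree_pow]
  set a := f.eval 0 ^ M with ha
  have hGd : X ^ M ∣ f * G ^ n - C a := by
    have : f * G ^ n - C a = (f - C (f.eval 0)) ^ M := by
      rw [hM, sub_pow_char_pow, ← hM, hG, ha, ← pow_mul, ← pow_succ', C_pow, mul_comm s n, hs1]
    rw [this]
    refine pow_dvd_pow_of_dvd ?_ M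
    rw [X_dvd_iff, coeff_zero_eq_eval_zero]; simp
  set D := B * M + J + m * M with hD
  let v : (Fin J × Fin n × Fin B) → K[X] := fun i =>
    X ^ ((i.2.2 : ℕ) * M + (i.1 : ℕ)) * (C (ζ ^ (i.2.1 : ℕ)) * G ^ (n - (i.2.1 : ℕ)))
  have hv : ∀ i, v i ∈ degreeLT K D := by
    intro i
    rw [mem_degreeLT]
    refine lt_of_le_of_lt degree_le_natDegree ?_
    rw [Nat.cast_lt]
    refine lt_of_le_of_lt natDegree_mul_le ?_
    rw [natDegree_X_pow]
    have h1 : (C (ζ ^ (i.2.1 : ℕ)) * G ^ (n - (i.2.1 : ℕ))).natDegree ≤ m * M := by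
      refine (natDegree_C_mul_le _ _).trans ?_
      rw [natDegree_pow, hGdeg]
      calc (n - (i.2.1 : ℕ)) * (s * m) ≤ n * (s * m) := Nat.mul_le_mul_right _ (Nat.sub_le _ _)
        _ = m * (n * s) := by ring
        _ ≤ m * M := Nat.mul_le_mul_left _ (by omega)
    have h2 : (i.2.2 : ℕ) * M ≤ B * M := Nat.mul_le_mul_right _ i.2.2.2.le
    have h3 := i.1.2
    omega
  let v' : (Fin J × Fin n × Fin B) → degreeLT K D := fun i => ⟨v i, hv i⟩
  have hnli : ¬ LinearIndependent K v' := by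
    intro hli
    have : Module.Finite K (degreeLT K D) := Module.Finite.equiv (degreeLTEquiv K D).symm
    have h1 := hli.fintype_card_le_finrank
    rw [(degreeLTEquiv K D).finrank_eq, Module.finrank_fin_fun] at h1
    simp only [Fintype.card_prod, Fintype.card_fin] at h1
    have : J * (n * B) = n * J * B := by ring
    omega
  obtain ⟨c, hc, ⟨i₀, j₀, b₀⟩, hne⟩ := Fintype.not_linearIndependent_iff.1 hnli
  have hc' : ∑ i, C (c i) * v i = 0 := by
    have := congrArg (Subtype.val) hc
    simpa [v', smul_eq_C_mul] using this
  let h : ℕ → K[X][X] := fun i => if hi : i < J then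
    ∑ j : Fin n, monomial (j : ℕ) (∑ b : Fin B, monomial (b : ℕ) (c (⟨i, hi⟩, j, b) ^ M)) else 0
  have hcoeff : ∀ (i : Fin J) (j : Fin n), (h i).coeff j =
      ∑ b : Fin B, monomial (b : ℕ) (c (i, j, b) ^ M) := by
    intro i j
    simp only [h, i.2, dif_pos, finset_sum_coeff, coeff_monomial]
    rw [Finset.sum_eq_single j]
    · simp
    · intro j' _ hj'
      rw [if_neg]; exact fun hh => hj' (Fin.ext hh)
    · simp
  have hh0 : ∃ i < J, h i ≠ 0 := by
    refine ⟨i₀, i₀.2, fun hz => hne ?_⟩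
    have h1 := hcoeff i₀ j₀
    rw [hz, coeff_zero] at h1
    have h2 := congrArg (fun q => q.coeff (b₀ : ℕ)) h1
    simp only [finset_sum_coeff, coeff_monomial, coeff_zero] at h2
    rw [Finset.sum_eq_single b₀] at h2
    · simpa [hMpos.ne'] using h2.symm
    · intro j' _ hj'
      rw [if_neg]; exact fun hh => hj' (Fin.ext hh)
    · simp
  have hhn : ∀ i, (h i).natDegree < n := by
    intro i
    simp only [h]
    split_ifs with hi
    · refine lt_of_le_of_lt (natDegree_sum_le_of_forall_le (n := n - 1) _ _ fun j _ => ?_) (by omega)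
      exact (natDegree_monomial_le _).trans (by omega)
    · simpa using hn
  have hhB : ∀ k i, ((h k).coeff i).natDegree ≤ B := by
    intro k i
    by_cases hk : k < J
    · by_cases hi : i < n
      · rw [hcoeff ⟨k, hk⟩ ⟨i, hi⟩]
        exact natDegree_sum_le_of_forall_le _ _ fun b _ =>
          (natDegree_monomial_le _).trans b.2.le
      · rw [coeff_eq_zero_of_natDegree_lt]; · simp
        have := hhn k; omega
    · simp [h, hk]
  set E := ∑ i ∈ Finset.range J, (h i).eval G * X ^ (M * i) with hE
  have hE0 : E ≠ 0 := nonvan2 hn hζ₀ Z e hcop a (pow_ne_zero _ hf00) f hf M B J hB hfB h hh0 hhn hhB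
    G hGd
  have hEeq : ∀ x, E.eval x = ∑ i : Fin J × Fin n × Fin B,
      c i ^ M * x ^ (i.2.2 : ℕ) * (G.eval x) ^ (i.2.1 : ℕ) * x ^ (M * (i.1 : ℕ)) := by
    intro x
    rw [hE, Finset.sum_range, eval_finset_sum, Fintype.sum_prod_type]
    refine Finset.sum_congr rfl fun i _ => ?_
    simp only [h, i.2, dif_pos, eval_mul, eval_finset_sum, eval_monomial, eval_pow, eval_X]
    rw [Fintype.sum_prod_type, Finset.sum_mul]
    refine Finset.sum_congr rfl fun j _ => ?_
    rw [Finset.sum_mul, Finset.sum_mul]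
  have hEdeg : E.natDegree ≤ B + J * M + m * M := by
    refine natDegree_sum_le_of_forall_le _ _ fun i hi => ?_
    refine natDegree_mul_le.trans ?_
    rw [natDegree_X_pow]
    have h1 : ((h i).eval G).natDegree ≤ B + m * M := by
      rw [eval_eq_sum_range]
      refine natDegree_sum_le_of_forall_le _ _ fun j hj => ?_
      refine natDegree_mul_le.trans ?_
      rw [natDegree_pow, hGdeg]
      have hjn : j ≤ n := by
        have := hhn i
        have := Finset.mem_range.1 hj
        omega
      have : j * (s * m) ≤ m * M := 
        calc j * (s * m) ≤ n * (s * m) := Nat.mul_le_mul_right _ hjn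
        _ = m * (n * s) := by ring
        _ ≤ m * M := Nat.mul_le_mul_left _ (by omega)
      have := hhB i j
      omega
    have h2 : M * i ≤ J * M := by
      rw [mul_comm]; exact Nat.mul_le_mul_right _ (Finset.mem_range.1 hi).le
    omega
  have hroot : ∀ x ∈ V, E.IsRoot x := by
    intro x hx
    have hGx : G.eval x ^ (M + 1) = ζ := by
      rw [← hV x hx, hG, eval_pow, pow_mul]
    have hG0 : G.eval x ≠ 0 := by
      intro h0
      rw [h0, zero_pow (by omega)] at hGx
      exact hζ hGx.symm
    have hcard : ∀ y : K, y ^ (M * M) = y := by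
      intro y
      have := FiniteField.pow_card y
      rwa [hQ, pow_two] at this
    have key : (E.eval x) ^ M * (G.eval x) ^ n = 0 := by
      have h1 := congrArg (eval x) hc'
      rw [eval_zero, eval_finset_sum] at h1
      rw [← h1, hEeq]
      rw [show ∀ y : K, y ^ M = y ^ p ^ t from fun y => by rw [hM], sum_pow_char_pow, ← hM,
        Finset.sum_mul]
      refine Finset.sum_congr rfl fun i _ => ?_
      simp only [v, eval_mul, eval_C, eval_pow, eval_X]
      rw [mul_pow, mul_pow, mul_pow, ← pow_mul (c i), hcard,
        show (x ^ (M * (i.1 : ℕ))) ^ M = x ^ (i.1 : ℕ) by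
          rw [← pow_mul, show M * (i.1 : ℕ) * M = M * M * i.1 by ring, pow_mul, hcard]]
      have hj : n = (n - (i.2.1 : ℕ)) + i.2.1 := by have := i.2.1.2; omega
      have h4 : (G.eval x ^ (i.2.1 : ℕ)) ^ M * G.eval x ^ n =
          ζ ^ (i.2.1 : ℕ) * G.eval x ^ (n - (i.2.1 : ℕ)) := by
        have h5 : G.eval x ^ n = G.eval x ^ (n - (i.2.1 : ℕ)) * G.eval x ^ (i.2.1 : ℕ) := by
          rw [← pow_add, ← hj]
        rw [h5, ← hGx]; ring
      rw [pow_add x, pow_mul x]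
      linear_combination (c i) * (x ^ (i.2.2 : ℕ)) ^ M * x ^ (i.1 : ℕ) * h4
    have := (mul_eq_zero.1 key).resolve_right (pow_ne_zero _ hG0)
    exact eq_zero_of_pow_eq_zero this
  calc V.card ≤ E.roots.toFinset.card := by
        refine Finset.card_le_card fun x hx => ?_
        rw [Multiset.mem_toFinset, mem_roots hE0]
        exact hroot x hx
    _ ≤ Multiset.card E.roots := Multiset.toFinset_card_le _
    _ ≤ E.natDegree := card_roots' _
    _ ≤ _ := hEdeg

lemma stepanov {K : Type*} [Field K] [Fintype K] (p t : ℕ) [Fact p.Prime] [CharP K p]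
    (M : ℕ) (hM : M = p ^ t) (hQ : Fintype.card K = M ^ 2)
    {n : ℕ} (hn : 0 < n) (hnM : n ∣ M - 1) {ζ₀ : K} (hζ₀ : IsPrimitiveRoot ζ₀ n)
    (Z : Finset K) (e : K → ℕ) (hcop : ∀ m : ℕ, (∀ z ∈ Z, n ∣ m * e z) → n ∣ m)
    (f : K[X]) (hf : f = ∏ z ∈ Z, (X - C z) ^ e z) (hf00 : f.eval 0 ≠ 0)
    (hMbig : 4 * n * (f.natDegree + 2) ≤ M)
    (ζ : K) (hζ : ζ ≠ 0) 
    (V : Finset K) (hV : ∀ x ∈ V, f.eval x ^ ((M ^ 2 - 1) / n) = ζ) :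
    n * V.card ≤ M ^ 2 + n * (9 * f.natDegree + 25) * M := by
  set m := f.natDegree with hm
  obtain ⟨s, hs⟩ := hnM
  have hM1 : 8 ≤ M := by nlinarith
  have hs1 : n * s + 1 = M := by omega
  set B := (M - 1) / (2 * n) with hB
  have hB1 : 2 * n * B ≤ M - 1 := Nat.mul_div_le _ _
  have hB2 : M - 1 < 2 * n * (B + 1) := by
    have := Nat.lt_mul_div_succ (M - 1) (show 0 < 2 * n by omega)
    simpa [hB] using this
  have hB3 : M ≤ 4 * n * B := by
    have : M ≤ 2 * n * B + 2 * n := by nlinarith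
    nlinarith
  have hmB : m ≤ B := by
    have : n * m ≤ n * B := by nlinarith
    exact Nat.le_of_mul_le_mul_left this hn
  set c := 8 * (m + 3) with hc
  have hBM : B ≤ M := by nlinarith
  have hsM : s ≤ M := by nlinarith
  have hcnt : B * M + (s + c) + m * M < n * (s + c) * B := by
    have h1 : n * (s + c) * B = (n * s) * B + (n * B) * c := by ring
    have h2 : n * s * B + B = B * M := by rw [← hs1]; ring
    have h3 : M * c ≤ 4 * (n * B * c) := by nlinarith
    have h4 : M * c = 8 * (M * (m + 3)) := by rw [hc]; ring
    have h5 : 8 * c ≤ M * c := Nat.mul_le_mul_right _ hM1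
    have h6 : M * (m + 3) = m * M + 3 * M := by ring
    nlinarith
  have := stepanov_aux p t M hM hQ hn ⟨s, hs⟩ hζ₀ Z e hcop f hf hf00 ζ hζ B (s + c) (by omega) hmB hcnt V hV
  calc n * V.card ≤ n * (B + (s + c) * M + m * M) := Nat.mul_le_mul_left _ this
    _ = n * B + (n * s) * M + n * (c + m) * M := by ring
    _ ≤ n * M + M * M + n * (c + m) * M := by
      gcongr; omega
    _ = M ^ 2 + n * (9 * m + 25) * M := by rw [hc]; ring
end

section
open Polynomial
lemma exists_char_pow_ne {F : Type*} [Field F] [Fintype F] (χ : MulChar F ℂ)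
    (hord : orderOf χ = Fintype.card F - 1) (e : ℕ) (he : ¬ (Fintype.card F - 1 ∣ e)) :
    ∃ c : F, c ≠ 0 ∧ χ c ^ e ≠ 1 := by
  have h1 : χ ^ e ≠ 1 := fun h => he (hord ▸ orderOf_dvd_of_pow_eq_one h)
  obtain ⟨c, hc⟩ := MulChar.ne_one_iff.1 h1
  refine ⟨c, c.ne_zero, ?_⟩
  rwa [MulChar.pow_apply_coe] at hc

lemma norm_char_le {F : Type*} [Field F] [Fintype F] (χ : MulChar F ℂ) (x : F) : ‖χ x‖ ≤ 1 := by
  by_cases hx : x = 0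
  · subst hx; simp [MulChar.map_zero]
  · have h1 : χ x ^ (Fintype.card F - 1) = 1 := by
      rw [← map_pow, FiniteField.pow_card_sub_one_eq_one x hx, map_one]
    have := Complex.norm_eq_one_of_pow_eq_one h1 (by have := Fintype.one_lt_card (α := F); omega)
    exact this.le

lemma exists_prim {F : Type*} [Field F] [Fintype F] (n g : ℕ) (h : n * g = Fintype.card F - 1) :
    ∃ ζ : F, IsPrimitiveRoot ζ n := by
  classical
  obtain ⟨u, hu⟩ := IsCyclic.exists_generator (α := Fˣ)
  have h1 := orderOf_eq_card_of_forall_mem_zpowers hu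
  rw [Nat.card_eq_fintype_card, Fintype.card_units] at h1
  have h2 := IsPrimitiveRoot.orderOf u
  rw [h1] at h2
  have h3 := h2.pow (by have := Fintype.one_lt_card (α := F); omega) (show Fintype.card F - 1 = g * n by rw [← h, mul_comm])
  exact ⟨_, (IsPrimitiveRoot.coe_units_iff).2 h3⟩

lemma ext_sum_bound {F : Type*} [Field F] [Fintype F] (χ : MulChar F ℂ)
    (hord : orderOf χ = Fintype.card F - 1) (Z : Finset F) (e : F → ℕ)
    (z₀ : F) (hz₀ : z₀ ∈ Z) (he : ¬ (Fintype.card F - 1 ∣ e z₀)) (hZ0 : (0 : F) ∉ Z) :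
    ∃ (R : ℝ) (M₀ : ℕ), ∀ (K : Type) [Field K] [Fintype K] [Algebra F K] (k : ℕ),
      Fintype.card K = Fintype.card F ^ (2 * k) → M₀ ≤ Fintype.card F ^ k →
      ‖∑ x : K, ∏ z ∈ Z, χ (Algebra.norm F (algebraMap F K z - x)) ^ e z‖ ≤
        R * (Fintype.card F : ℝ) ^ k := by
  classical
  set q := Fintype.card F with hq
  have hq1 : 1 < q := Fintype.one_lt_card
  set g := Nat.gcd (q - 1) (Z.gcd e) with hg
  have hgpos : 0 < g := Nat.gcd_pos_of_pos_left _ (by omega)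
  obtain ⟨n, hn⟩ : g ∣ q - 1 := Nat.gcd_dvd_left _ _
  have hge : ∀ z ∈ Z, g ∣ e z := fun z hz =>
    (Nat.gcd_dvd_right _ _).trans (Finset.gcd_dvd hz)
  have hnpos : 0 < n := by
    rcases Nat.eq_zero_or_pos n with h | h
    · rw [h] at hn; omega
    · exact h
  have hgn : ¬ (q - 1 ∣ g) := fun h => he (h.trans (hge _ hz₀))
  set e' : F → ℕ := fun z => e z / g with he'
  have hee' : ∀ z ∈ Z, e z = e' z * g := fun z hz => (Nat.div_mul_cancel (hge z hz)).symm
  have hcop : ∀ m : ℕ, (∀ z ∈ Z, n ∣ m * e' z) → n ∣ m := by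
    intro m hm
    have h1 : q - 1 ∣ m * Z.gcd e := by
      have : m * Z.gcd e = Z.gcd (fun z => m * e z) := by
        rw [Finset.gcd_mul_left]; simp
      rw [this]
      refine Finset.dvd_gcd fun z hz => ?_
      rw [hee' z hz, hn, mul_comm g n, ← mul_assoc]
      exact Nat.mul_dvd_mul_right (hm z hz) g
    have h2 : q - 1 ∣ m * g := by
      rw [hg, ← Nat.gcd_mul_left]
      exact Nat.dvd_gcd (dvd_mul_left _ _) h1
    rw [hn, mul_comm] at h2
    exact Nat.dvd_of_mul_dvd_mul_right hgpos h2
  set m := ∑ z ∈ Z, e' z with hm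
  refine ⟨(n * (9 * m + 25) : ℝ) + Z.card, 4 * n * (m + 2), ?_⟩
  intro K _ _ _ k hcard hM
  set M := q ^ k with hMdef
  have hMpos : 0 < M := by positivity
  have hQ : Fintype.card K = M ^ 2 := by rw [hcard, hMdef, ← pow_mul, mul_comm]
  obtain ⟨p, hp⟩ := CharP.exists F
  obtain ⟨j, hpp, hj⟩ := FiniteField.card F p
  have : Fact p.Prime := ⟨hpp⟩
  have : CharP K p := charP_of_injective_algebraMap (algebraMap F K).injective p
  obtain ⟨ζF, hζF⟩ := exists_prim (F := F) n g (by rw [mul_comm, ← hn])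
  have hζK := hζF.map_of_injective (algebraMap F K).injective
  have hnM : n ∣ M - 1 := by
    refine Dvd.dvd.trans (b := q - 1) ⟨g, by rw [hn, mul_comm]⟩ ?_
    simpa using Nat.sub_dvd_pow_sub_pow q 1 k
  let ι : F ↪ K := ⟨algebraMap F K, (algebraMap F K).injective⟩
  set eK : K → ℕ := Function.extend (algebraMap F K) e' 0 with heK
  have heK' : ∀ z, eK (algebraMap F K z) = e' z := fun z =>
    (algebraMap F K).injective.extend_apply _ _ _
  set f : K[X] := ∏ z ∈ Z.map ι, (X - C z) ^ eK z with hf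
  have hf' : f = ∏ z ∈ Z, (X - C (algebraMap F K z)) ^ e' z := by
    rw [hf, Finset.prod_map]
    exact Finset.prod_congr rfl fun z _ => by rw [show ι z = algebraMap F K z from rfl, heK']
  have hfdeg : f.natDegree = m := by
    rw [hf', natDegree_prod_of_monic _ _ (fun z _ => (monic_X_sub_C _).pow _)]
    simp [hm]
  have hcopK : ∀ m : ℕ, (∀ z ∈ Z.map ι, n ∣ m * eK z) → n ∣ m := by
    intro m h
    refine hcop m fun z hz => ?_
    have := h (ι z) (Finset.mem_map_of_mem _ hz)
    rwa [show ι z = algebraMap F K z from rfl, heK'] at this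
  have hf00 : f.eval 0 ≠ 0 := by
    rw [hf', eval_prod, Finset.prod_ne_zero_iff]
    intro z hz
    simp only [eval_pow, eval_sub, eval_X, eval_C, zero_sub]
    refine pow_ne_zero _ (neg_ne_zero.2 ?_)
    rw [Ne, map_eq_zero]
    rintro rfl; exact hZ0 hz
  set u : K → K := fun x => ∏ z ∈ Z, (algebraMap F K z - x) ^ e' z with hu
  have huf : ∀ x, f.eval x = (-1) ^ m * u x := by
    intro x
    rw [hf', hm, ← Finset.prod_pow_eq_pow_sum, hu, ← Finset.prod_mul_distrib, eval_prod]
    refine Finset.prod_congr rfl fun z _ => ?_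
    rw [← mul_pow]; simp
  set η : K → F := fun x => Algebra.norm F (u x) ^ g with hη
  have hηK : ∀ x, algebraMap F K (η x) = u x ^ ((M ^ 2 - 1) / n) := by
    intro x
    rw [hη, map_pow, FiniteField.algebraMap_norm_eq_pow, ← pow_mul, Nat.card_eq_fintype_card,
      Nat.card_eq_fintype_card, hQ, ← hq]
    congr 1
    obtain ⟨w, hw⟩ : q - 1 ∣ M ^ 2 - 1 := by
      rw [hMdef, ← pow_mul]
      simpa using Nat.sub_dvd_pow_sub_pow q 1 (k * 2)
    rw [hw, Nat.mul_div_cancel_left _ (by omega), hn, show g * n * w = n * (w * g) by ring,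
      Nat.mul_div_cancel_left _ hnpos]
  have hterm : ∀ x : K, ∏ z ∈ Z, χ (Algebra.norm F (algebraMap F K z - x)) ^ e z = χ (η x) := by
    intro x
    rw [hη, hu]
    simp only [map_prod, map_pow]
    rw [← Finset.prod_pow]
    exact Finset.prod_congr rfl fun z hz => by rw [hee' z hz, pow_mul]
  simp_rw [hterm]
  set μ : Finset F := Finset.univ.filter (fun ζ => ζ ^ n = 1) with hμ
  have hμ0 : ∀ ζ ∈ μ, ζ ≠ 0 := by
    intro ζ hζ h0
    rw [hμ, Finset.mem_filter, h0, zero_pow hnpos.ne'] at hζ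
    exact zero_ne_one hζ.2
  have hμcard : μ.card ≤ n := by
    have : μ ⊆ (nthRoots n (1 : F)).toFinset := by
      intro ζ hζ
      rw [Multiset.mem_toFinset, mem_nthRoots hnpos]
      exact (Finset.mem_filter.1 hζ).2
    exact (Finset.card_le_card this).trans ((Multiset.toFinset_card_le _).trans (card_nthRoots _ _))
  have hμsum : ∑ ζ ∈ μ, χ ζ = 0 := by
    obtain ⟨c, hc0, hc⟩ := exists_char_pow_ne χ hord g hgn
    have hcg : (c ^ g) ^ n = 1 := by
      rw [← pow_mul, ← hn, FiniteField.pow_card_sub_one_eq_one c hc0]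
    have hcg0 : c ^ g ≠ 0 := pow_ne_zero _ hc0
    have h1 : ∑ ζ ∈ μ, χ ζ = ∑ ζ ∈ μ, χ (c ^ g * ζ) := by
      symm
      refine Finset.sum_bij' (fun ζ _ => c ^ g * ζ) (fun ζ _ => (c ^ g)⁻¹ * ζ) ?_ ?_ ?_ ?_ ?_
      · intro ζ hζ
        rw [hμ, Finset.mem_filter] at hζ ⊢
        exact ⟨Finset.mem_univ _, by rw [mul_pow, hcg, hζ.2, one_mul]⟩
      · intro ζ hζ
        rw [hμ, Finset.mem_filter] at hζ ⊢
        exact ⟨Finset.mem_univ _, by rw [mul_pow, inv_pow, hcg, hζ.2, inv_one, one_mul]⟩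
      · intro ζ _; exact inv_mul_cancel_left₀ hcg0 ζ
      · intro ζ _; exact mul_inv_cancel_left₀ hcg0 ζ
      · intro ζ _; rfl
    simp_rw [map_mul] at h1
    rw [← Finset.mul_sum, map_pow] at h1
    have h2 : (1 - χ c ^ g) * ∑ ζ ∈ μ, χ ζ = 0 := by rw [sub_mul, ← h1]; ring
    exact (mul_eq_zero.1 h2).resolve_left (sub_ne_zero.2 (Ne.symm hc))
  set N : F → ℕ := fun ζ => (Finset.univ.filter (fun x : K => η x = ζ)).card with hN
  have hηmem : ∀ x, u x ≠ 0 → η x ∈ μ := by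
    intro x hx
    rw [hμ, Finset.mem_filter]
    refine ⟨Finset.mem_univ _, ?_⟩
    rw [hη, ← pow_mul, ← hn]
    exact FiniteField.pow_card_sub_one_eq_one _ (by rwa [Ne, Algebra.norm_eq_zero_iff])
  have hηz : ∀ x, u x = 0 → η x = 0 := by
    intro x hx
    rw [hη]; simp [hx, hgpos.ne']
  have hsum : ∑ x : K, χ (η x) = ∑ ζ ∈ μ, χ ζ * N ζ := by
    have h1 : ∑ x : K, χ (η x) = ∑ x ∈ Finset.univ.filter (fun x => η x ∈ μ), χ (η x) := by
      rw [Finset.sum_filter]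
      refine Finset.sum_congr rfl fun x _ => ?_
      by_cases hx : u x = 0
      · rw [hηz x hx]; simp [MulChar.map_zero]
      · rw [if_pos (hηmem x hx)]
    rw [h1, ← Finset.sum_fiberwise_of_maps_to (g := η) (t := μ) (fun x hx => (Finset.mem_filter.1 hx).2)]
    refine Finset.sum_congr rfl fun ζ hζ => ?_
    rw [Finset.sum_congr rfl (g := fun _ => χ ζ) (fun x hx => by rw [(Finset.mem_filter.1 hx).2]),
      Finset.sum_const, nsmul_eq_mul, mul_comm, hN]
    congr 3
    ext x; simp only [Finset.mem_filter, Finset.mem_univ, true_and]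
    exact ⟨fun h => h.2, fun h => ⟨h ▸ hζ, h⟩⟩
  have hNle : ∀ ζ ∈ μ, n * N ζ ≤ M ^ 2 + n * (9 * m + 25) * M := by
    intro ζ hζ
    rw [← hfdeg] at hM ⊢
    have hζ0 : (algebraMap F K ζ) ≠ 0 := by simpa using hμ0 ζ hζ
    refine stepanov p (j * k) M ?_ hQ hnpos hnM hζK (Z.map ι) eK hcopK f hf hf00 hM
      (((-1) ^ m) ^ ((M ^ 2 - 1) / n) * algebraMap F K ζ) ?_ _ ?_
    · rw [hMdef, hq, hj, pow_mul]
    · exact mul_ne_zero (pow_ne_zero _ (pow_ne_zero _ (by simp))) hζ0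
    · intro x hx
      rw [huf, mul_pow, ← hηK, (Finset.mem_filter.1 hx).2]
  have hNsum : M ^ 2 ≤ ∑ ζ ∈ μ, N ζ + Z.card := by
    have h1 : (Finset.univ.filter (fun x : K => η x ∈ μ)).card = ∑ ζ ∈ μ, N ζ := by
      rw [Finset.card_eq_sum_card_fiberwise (f := η) (t := μ)
        (s := Finset.univ.filter (fun x : K => η x ∈ μ))
        (fun x hx => (Finset.mem_filter.1 hx).2)]
      refine Finset.sum_congr rfl fun ζ hζ => ?_
      rw [hN]
      congr 1
      ext x; simp only [Finset.mem_filter, Finset.mem_univ, true_and]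
      exact ⟨fun h => h.2, fun h => ⟨h ▸ hζ, h⟩⟩
    have h2 : (Finset.univ.filter (fun x : K => ¬ η x ∈ μ)).card ≤ Z.card := by
      rw [← Finset.card_map ι]
      refine Finset.card_le_card fun x hx => ?_
      have hx0 : u x = 0 := by
        by_contra h
        exact (Finset.mem_filter.1 hx).2 (hηmem x h)
      obtain ⟨z, hz, hz'⟩ := Finset.prod_eq_zero_iff.1 hx0
      have := eq_zero_of_pow_eq_zero hz'
      rw [Finset.mem_map]
      exact ⟨z, hz, sub_eq_zero.1 this⟩
    rw [← hQ, ← Finset.card_univ, ← Finset.card_filter_add_card_filter_not (fun x : K => η x ∈ μ), h1]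
    omega
  rw [hsum]
  set A : ℝ := ((M : ℝ) ^ 2 + n * (9 * m + 25) * M) / n with hA
  have hn0 : (0 : ℝ) < n := by exact_mod_cast hnpos
  have hNA : ∀ ζ ∈ μ, (N ζ : ℝ) ≤ A := by
    intro ζ hζ
    rw [hA, le_div_iff₀ hn0, mul_comm]
    exact_mod_cast hNle ζ hζ
  have hS : ∑ ζ ∈ μ, χ ζ * N ζ = ∑ ζ ∈ μ, χ ζ * ((N ζ - A : ℝ) : ℂ) := by
    push_cast
    simp_rw [mul_sub]
    rw [Finset.sum_sub_distrib, ← Finset.sum_mul, hμsum, zero_mul, sub_zero]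
  have hA0 : 0 ≤ A := by positivity
  rw [hS]
  have hNsumR : (M : ℝ) ^ 2 ≤ ∑ ζ ∈ μ, (N ζ : ℝ) + Z.card := by exact_mod_cast hNsum
  calc ‖∑ ζ ∈ μ, χ ζ * ((N ζ - A : ℝ) : ℂ)‖ ≤ ∑ ζ ∈ μ, (A - N ζ) := by
        refine norm_sum_le_of_le _ fun ζ hζ => ?_
        rw [norm_mul, Complex.norm_real, Real.norm_eq_abs, abs_sub_comm,
          abs_of_nonneg (sub_nonneg.2 (hNA ζ hζ))]
        exact mul_le_of_le_one_left (sub_nonneg.2 (hNA ζ hζ)) (norm_char_le χ ζ)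
    _ = μ.card * A - ∑ ζ ∈ μ, (N ζ : ℝ) := by
        rw [Finset.sum_sub_distrib, Finset.sum_const, nsmul_eq_mul]
    _ ≤ n * A - ((M : ℝ) ^ 2 - Z.card) := by
        have : (μ.card : ℝ) * A ≤ n * A :=
          mul_le_mul_of_nonneg_right (by exact_mod_cast hμcard) hA0
        linarith
    _ = n * (9 * m + 25) * M + Z.card := by
        rw [hA, mul_div_cancel₀ _ hn0.ne']; ring
    _ ≤ ((n * (9 * m + 25) : ℝ) + Z.card) * M := by
        have h1 : (1 : ℝ) ≤ M := Nat.one_le_cast.2 hMpos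
        have h2 : (0 : ℝ) ≤ Z.card := Nat.cast_nonneg _
        nlinarith
    _ = ((n * (9 * m + 25) : ℝ) + Z.card) * (q : ℝ) ^ k := by
        have : (M : ℝ) = (q : ℝ) ^ k := Nat.cast_pow q k
        rw [this]
end

section
open Polynomial
lemma mon_finite (F : Type*) [Field F] [Fintype F] (k : ℕ) :
    {g : F[X] | g.Monic ∧ g.natDegree = k}.Finite := by
  refine Set.Finite.of_injOn (f := fun (g : F[X]) (i : Fin k) => g.coeff i) (t := Set.univ)
    (fun _ _ => Set.mem_univ _) ?_ Set.finite_univ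
  rintro g ⟨hg, hgk⟩ h ⟨hh, hhk⟩ hgh
  ext i
  rcases lt_trichotomy i k with hi | hi | hi
  · exact congrFun hgh ⟨i, hi⟩
  · have h1 := hg.coeff_natDegree
    have h2 := hh.coeff_natDegree
    rw [hgk] at h1; rw [hhk] at h2
    rw [hi, h1, h2]
  · rw [coeff_eq_zero_of_natDegree_lt (by omega), coeff_eq_zero_of_natDegree_lt (by omega)]

/-- monic polynomials of degree k -/
noncomputable def mon (F : Type*) [Field F] [Fintype F] (k : ℕ) : Finset F[X] :=
  (mon_finite F k).toFinset

lemma mem_mon {F : Type*} [Field F] [Fintype F] {k : ℕ} {g : F[X]} :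
    g ∈ mon F k ↔ g.Monic ∧ g.natDegree = k := by
  simp [mon]

open Classical in
/-- monic irreducible polynomials of degree k -/
noncomputable def irr (F : Type*) [Field F] [Fintype F] (k : ℕ) : Finset F[X] :=
  (mon F k).filter Irreducible

lemma mem_irr {F : Type*} [Field F] [Fintype F] {k : ℕ} {g : F[X]} :
    g ∈ irr F k ↔ (g.Monic ∧ g.natDegree = k) ∧ Irreducible g := by
  simp [irr, mem_mon]

open Classical in
lemma degree_count {F : Type*} [Field F] [Fintype F] {k : ℕ} {g : F[X]} (hg : g ∈ mon F k) :
    k = ∑ d ∈ Finset.Icc 1 k, ∑ P ∈ irr F d, ∑ a ∈ Finset.Icc 1 k, if P ^ a ∣ g then d else 0 := by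
  obtain ⟨hm, hk⟩ := mem_mon.1 hg
  have hg0 : g ≠ 0 := hm.ne_zero
  set s := UniqueFactorizationMonoid.normalizedFactors g with hs
  have hprod : s.prod = g := by
    rw [hs, UniqueFactorizationMonoid.prod_normalizedFactors_eq hg0, hm.normalize_eq_self]
  have hirr : ∀ P ∈ s, Irreducible P := fun P hP =>
    UniqueFactorizationMonoid.irreducible_of_normalized_factor P hP
  have hmon : ∀ P ∈ s, P.Monic := fun P hP =>
    by
      have h1 := UniqueFactorizationMonoid.normalize_normalized_factor P hP
      rw [← h1]
      exact monic_normalize (hirr P hP).ne_zero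
  have hcount : ∀ P : F[X], P.Monic → Irreducible P → ∀ a, P ^ a ∣ g ↔ a ≤ s.count P := by
    intro P hPm hPi a
    rw [pow_dvd_iff_le_emultiplicity,
      UniqueFactorizationMonoid.emultiplicity_eq_count_normalizedFactors hPi hg0,
      hPm.normalize_eq_self, Nat.cast_le]
  have hcountle : ∀ P : F[X], P.Monic → Irreducible P → s.count P ≤ k := by
    intro P hPm hPi
    have h1 := (hcount P hPm hPi _).2 le_rfl
    have h2 := natDegree_le_of_dvd h1 hg0
    rw [natDegree_pow, hk] at h2
    have h3 := hPi.natDegree_pos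
    nlinarith
  have hinner : ∀ d ∈ Finset.Icc 1 k, ∀ P ∈ irr F d,
      (∑ a ∈ Finset.Icc 1 k, if P ^ a ∣ g then d else 0) = s.count P * P.natDegree := by
    intro d hd P hP
    obtain ⟨⟨hPm, hPd⟩, hPi⟩ := mem_irr.1 hP
    rw [← Finset.sum_filter, Finset.sum_const, smul_eq_mul, hPd]
    congr 1
    have : (Finset.Icc 1 k).filter (fun a => P ^ a ∣ g) = Finset.Icc 1 (s.count P) := by
      ext a
      have := hcountle P hPm hPi
      simp only [Finset.mem_filter, Finset.mem_Icc, hcount P hPm hPi]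
      omega
    rw [this]; simp
  rw [Finset.sum_congr rfl fun d hd => Finset.sum_congr rfl (hinner d hd)]
  have hdeg : k = ∑ P ∈ s.toFinset, s.count P * P.natDegree := by
    rw [← hk]
    conv_lhs => rw [← hprod]
    rw [natDegree_multiset_prod_of_monic _ hmon, Finset.sum_multiset_map_count]
    simp
  conv_lhs => rw [hdeg]
  rw [← Finset.sum_fiberwise_of_maps_to (s := s.toFinset) (t := Finset.Icc 1 k) (g := natDegree)]
  · refine Finset.sum_congr rfl fun d hd => ?_
    refine Finset.sum_subset ?_ ?_
    · intro P hP
      rw [Finset.mem_filter, Multiset.mem_toFinset] at hP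
      exact mem_irr.2 ⟨⟨hmon P hP.1, hP.2⟩, hirr P hP.1⟩
    · intro P hP hP'
      have hd := (mem_irr.1 hP).1.2
      have : P ∉ s := fun h => hP' (by rw [Finset.mem_filter, Multiset.mem_toFinset]; exact ⟨h, hd⟩)
      rw [Multiset.count_eq_zero_of_notMem this, zero_mul]
  · intro P hP
    rw [Multiset.mem_toFinset] at hP
    rw [Finset.mem_Icc]
    refine ⟨(hirr P hP).natDegree_pos, ?_⟩
    rw [← hk]
    exact natDegree_le_of_dvd (UniqueFactorizationMonoid.dvd_of_mem_normalizedFactors hP) hg0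

/-- the multiplicative function -/
noncomputable def lam {F : Type*} [Field F] (χ : MulChar F ℂ) (Z : Finset F) (e : F → ℕ)
    (g : F[X]) : ℂ := ∏ z ∈ Z, χ (g.eval z) ^ e z

lemma lam_mul {F : Type*} [Field F] (χ : MulChar F ℂ) (Z : Finset F) (e : F → ℕ) (g h : F[X]) :
    lam χ Z e (g * h) = lam χ Z e g * lam χ Z e h := by
  simp [lam, mul_pow, Finset.prod_mul_distrib]

lemma lam_one {F : Type*} [Field F] (χ : MulChar F ℂ) (Z : Finset F) (e : F → ℕ) :
    lam χ Z e 1 = 1 := by simp [lam]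

lemma lam_pow {F : Type*} [Field F] (χ : MulChar F ℂ) (Z : Finset F) (e : F → ℕ) (g : F[X])
    (a : ℕ) : lam χ Z e (g ^ a) = lam χ Z e g ^ a := by
  induction a with
  | zero => simp [lam_one]
  | succ a ih => rw [pow_succ, lam_mul, ih, pow_succ]

/-- coefficients of the L-function -/
noncomputable def cc {F : Type*} [Field F] [Fintype F] (χ : MulChar F ℂ) (Z : Finset F) (e : F → ℕ)
    (k : ℕ) : ℂ := ∑ g ∈ mon F k, lam χ Z e g

/-- power sums -/
noncomputable def ss {F : Type*} [Field F] [Fintype F] (χ : MulChar F ℂ) (Z : Finset F) (e : F → ℕ)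
    (i : ℕ) : ℂ := ∑ d ∈ Finset.Icc 1 i, ∑ a ∈ Finset.Icc 1 i,
      if d * a = i then ∑ P ∈ irr F d, (d : ℂ) * lam χ Z e P ^ a else 0

lemma ss_ext {F : Type*} [Field F] [Fintype F] (χ : MulChar F ℂ) (Z : Finset F) (e : F → ℕ)
    (i k : ℕ) (hi : 1 ≤ i) (hik : i ≤ k) : ss χ Z e i = ∑ d ∈ Finset.Icc 1 k, ∑ a ∈ Finset.Icc 1 k,
      if d * a = i then ∑ P ∈ irr F d, (d : ℂ) * lam χ Z e P ^ a else 0 := by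
  rw [ss]
  have hsub : Finset.Icc 1 i ⊆ Finset.Icc 1 k := Finset.Icc_subset_Icc_right hik
  rw [← Finset.sum_subset hsub]
  · refine Finset.sum_congr rfl fun d hd => Finset.sum_subset hsub ?_
    intro a ha ha'
    rw [if_neg]
    rintro rfl
    simp only [Finset.mem_Icc] at *
    exact ha' ⟨ha.1, by nlinarith⟩
  · intro d hd hd'
    refine Finset.sum_eq_zero fun a ha => ?_
    rw [if_neg]
    rintro rfl
    simp only [Finset.mem_Icc] at *
    exact hd' ⟨hd.1, by nlinarith⟩

open Classical in
lemma sum_dvd {F : Type*} [Field F] [Fintype F] (χ : MulChar F ℂ) (Z : Finset F) (e : F → ℕ)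
    (k d a : ℕ) (P : F[X]) (hP : P ∈ irr F d) :
    (∑ g ∈ mon F k, if P ^ a ∣ g then lam χ Z e g else 0) =
      if d * a ≤ k then lam χ Z e P ^ a * cc χ Z e (k - d * a) else 0 := by
  obtain ⟨⟨hPm, hPd⟩, hPi⟩ := mem_irr.1 hP
  have hPam : (P ^ a).Monic := hPm.pow a
  have hPad : (P ^ a).natDegree = d * a := by rw [natDegree_pow, hPd, mul_comm]
  split_ifs with h
  · rw [← Finset.sum_filter, cc, Finset.mul_sum]
    symm
    refine Finset.sum_bij (fun g _ => P ^ a * g) ?_ ?_ ?_ ?_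
    · intro g hg
      obtain ⟨h1, h2⟩ := mem_mon.1 hg
      rw [Finset.mem_filter, mem_mon]
      refine ⟨⟨hPam.mul h1, ?_⟩, dvd_mul_right _ _⟩
      rw [hPam.natDegree_mul h1, hPad, h2]; omega
    · intro g _ g' _ hgg
      exact mul_left_cancel₀ hPam.ne_zero hgg
    · intro g hg
      rw [Finset.mem_filter, mem_mon] at hg
      obtain ⟨⟨h1, h2⟩, w, hw⟩ := hg
      have hwm : w.Monic := hPam.of_mul_monic_left (hw ▸ h1)
      refine ⟨w, ?_, hw.symm⟩
      rw [mem_mon]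
      refine ⟨hwm, ?_⟩
      rw [hw, hPam.natDegree_mul hwm, hPad] at h2
      omega
    · intro g hg
      rw [lam_mul, lam_pow]
  · refine Finset.sum_eq_zero fun g hg => ?_
    obtain ⟨h1, h2⟩ := mem_mon.1 hg
    rw [if_neg]
    intro hd
    have := natDegree_le_of_dvd hd h1.ne_zero
    omega

lemma newton {F : Type*} [Field F] [Fintype F] (χ : MulChar F ℂ) (Z : Finset F) (e : F → ℕ)
    (k : ℕ) : (k : ℂ) * cc χ Z e k = ∑ i ∈ Finset.Icc 1 k, ss χ Z e i * cc χ Z e (k - i) := by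
  classical
  have hL : (k : ℂ) * cc χ Z e k = ∑ d ∈ Finset.Icc 1 k, ∑ P ∈ irr F d, ∑ a ∈ Finset.Icc 1 k,
      (d : ℂ) * if d * a ≤ k then lam χ Z e P ^ a * cc χ Z e (k - d * a) else 0 := by
    rw [cc, Finset.mul_sum]
    have : ∀ g ∈ mon F k, (k : ℂ) * lam χ Z e g = ∑ d ∈ Finset.Icc 1 k, ∑ P ∈ irr F d,
        ∑ a ∈ Finset.Icc 1 k, (d : ℂ) * if P ^ a ∣ g then lam χ Z e g else 0 := by
      intro g hg
      have h1 := congrArg (Nat.cast : ℕ → ℂ) (degree_count hg)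
      rw [h1]
      push_cast
      simp_rw [Finset.sum_mul]
      refine Finset.sum_congr rfl fun d _ => Finset.sum_congr rfl fun P _ =>
        Finset.sum_congr rfl fun a _ => ?_
      split_ifs <;> simp
    rw [Finset.sum_congr rfl this, Finset.sum_comm]
    refine Finset.sum_congr rfl fun d _ => ?_
    rw [Finset.sum_comm]
    refine Finset.sum_congr rfl fun P hP => ?_
    rw [Finset.sum_comm]
    refine Finset.sum_congr rfl fun a _ => ?_
    rw [← Finset.mul_sum, sum_dvd χ Z e k d a P hP]
  have hR : ∑ i ∈ Finset.Icc 1 k, ss χ Z e i * cc χ Z e (k - i) =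
      ∑ d ∈ Finset.Icc 1 k, ∑ a ∈ Finset.Icc 1 k, ∑ i ∈ Finset.Icc 1 k,
      if d * a = i then (∑ P ∈ irr F d, (d : ℂ) * lam χ Z e P ^ a) * cc χ Z e (k - d * a) else 0 := by
    have : ∀ i ∈ Finset.Icc 1 k, ss χ Z e i * cc χ Z e (k - i) =
      ∑ d ∈ Finset.Icc 1 k, ∑ a ∈ Finset.Icc 1 k, 
      if d * a = i then (∑ P ∈ irr F d, (d : ℂ) * lam χ Z e P ^ a) * cc χ Z e (k - d * a) else 0 := by
      intro i hi
      rw [Finset.mem_Icc] at hi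
      rw [ss_ext χ Z e i k hi.1 hi.2, Finset.sum_mul]
      simp_rw [Finset.sum_mul]
      refine Finset.sum_congr rfl fun d _ => Finset.sum_congr rfl fun a _ => ?_
      split_ifs with h
      · rw [h, Finset.sum_mul]
      · simp
    rw [Finset.sum_congr rfl this, Finset.sum_comm]
    exact Finset.sum_congr rfl fun d _ => Finset.sum_comm
  rw [hL, hR]
  refine Finset.sum_congr rfl fun d hd => ?_
  rw [Finset.sum_comm]
  refine Finset.sum_congr rfl fun a ha => ?_
  rw [Finset.sum_ite_eq]
  have : d * a ∈ Finset.Icc 1 k ↔ d * a ≤ k := by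
    rw [Finset.mem_Icc] at *
    have : 1 ≤ d * a := Nat.mul_pos hd.1 ha.1
    tauto
  simp only [this]
  split_ifs
  · rw [Finset.sum_mul]
    exact Finset.sum_congr rfl fun P _ => by ring
  · simp
end

section
open Polynomial
lemma cc_zero {F : Type*} [Field F] [Fintype F] (χ : MulChar F ℂ) (Z : Finset F) (e : F → ℕ) :
    cc χ Z e 0 = 1 := by
  have : mon F 0 = {1} := by
    ext g
    rw [mem_mon, Finset.mem_singleton]
    constructor
    · rintro ⟨h1, h2⟩
      exact h1.natDegree_eq_zero.1 h2
    · rintro rfl; exact ⟨monic_one, natDegree_one⟩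
  rw [cc, this, Finset.sum_singleton, lam_one]

lemma cc_eq_zero {F : Type*} [Field F] [Fintype F] (χ : MulChar F ℂ)
    (hord : orderOf χ = Fintype.card F - 1) (Z : Finset F) (e : F → ℕ)
    (z₀ : F) (hz₀ : z₀ ∈ Z) (he : ¬ (Fintype.card F - 1 ∣ e z₀)) (k : ℕ) (hk : Z.card ≤ k) :
    cc χ Z e k = 0 := by
  classical
  obtain ⟨c, hc0, hc⟩ := exists_char_pow_ne χ hord (e z₀) he
  set l := Lagrange.basis Z id z₀ with hl
  have hinj : Set.InjOn (id : F → F) (Z : Set F) := Function.injective_id.injOn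
  have hl0 : l.eval z₀ = 1 := Lagrange.eval_basis_self (v := id) hinj hz₀
  have hl1 : ∀ z ∈ Z, z ≠ z₀ → l.eval z = 0 := fun z hz hne =>
    Lagrange.eval_basis_of_ne (v := id) hne.symm hz
  have hZpos : 0 < Z.card := Finset.card_pos.2 ⟨_, hz₀⟩
  have hldeg : l.degree < k := by
    rw [hl, Lagrange.degree_basis hinj hz₀]
    exact_mod_cast (by omega : Z.card - 1 < k)
  have hmem : ∀ (t : F) (g : F[X]), g ∈ mon F k → g + C t * l ∈ mon F k := by
    intro t g hg
    obtain ⟨h1, h2⟩ := mem_mon.1 hg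
    have hdeg : (C t * l).degree < g.degree := by
      rw [degree_eq_natDegree h1.ne_zero, h2]
      refine lt_of_le_of_lt ?_ hldeg
      rw [degree_mul]
      calc (C t).degree + l.degree ≤ 0 + l.degree := by gcongr; exact degree_C_le
        _ = _ := zero_add _
    refine mem_mon.2 ⟨h1.add_of_left hdeg, ?_⟩
    rw [natDegree_add_eq_left_of_degree_lt hdeg, h2]
  have h1 : cc χ Z e k = ∑ g ∈ mon F k, lam χ Z e (g + C ((c - 1) * g.eval z₀) * l) := by
    rw [cc]; symm
    refine Finset.sum_bij' (fun g _ => g + C ((c - 1) * g.eval z₀) * l)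
      (fun g _ => g + C ((c⁻¹ - 1) * g.eval z₀) * l) (fun g hg => hmem _ g hg)
      (fun g hg => hmem _ g hg) ?_ ?_ (fun _ _ => rfl)
    · intro g _
      simp only [eval_add, eval_mul, eval_C, hl0]
      rw [add_assoc, ← add_mul, ← C_add]
      have : (c - 1) * eval z₀ g + (c⁻¹ - 1) * (eval z₀ g + (c - 1) * eval z₀ g * 1) = 0 := by
        field_simp; ring
      rw [this]; simp
    · intro g _
      simp only [eval_add, eval_mul, eval_C, hl0]
      rw [add_assoc, ← add_mul, ← C_add]
      have : (c⁻¹ - 1) * eval z₀ g + (c - 1) * (eval z₀ g + (c⁻¹ - 1) * eval z₀ g * 1) = 0 := by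
        field_simp; ring
      rw [this]; simp
  have h2 : ∀ g : F[X], lam χ Z e (g + C ((c - 1) * g.eval z₀) * l) = χ c ^ e z₀ * lam χ Z e g := by
    intro g
    rw [lam, lam, ← Finset.mul_prod_erase _ _ hz₀, ← Finset.mul_prod_erase _ _ hz₀, ← mul_assoc]
    congr 1
    · rw [← mul_pow, ← map_mul]
      simp only [eval_add, eval_mul, eval_C, hl0]
      congr 2; ring
    · refine Finset.prod_congr rfl fun z hz => ?_
      rw [Finset.mem_erase] at hz
      simp [hl1 z hz.2 hz.1]
  simp_rw [h2] at h1
  rw [← Finset.mul_sum, ← cc] at h1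
  have h3 : (1 - χ c ^ e z₀) * cc χ Z e k = 0 := by rw [sub_mul, ← h1]; ring
  exact (mul_eq_zero.1 h3).resolve_left (sub_ne_zero.2 (Ne.symm hc))

lemma norm_sub_eq {F K : Type*} [Field F] [Field K] [Algebra F K] [FiniteDimensional F K]
    (z : F) (x : K) : Algebra.norm F (algebraMap F K z - x) =
      (minpoly F x).eval z ^ (Module.finrank F K / (minpoly F x).natDegree) := by
  set y := algebraMap F K z - x with hy
  have hyx : y = -(x - algebraMap F K z) := by rw [hy]; ring
  have hint : IsIntegral F y := Algebra.IsIntegral.isIntegral y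
  have hintx : IsIntegral F x := Algebra.IsIntegral.isIntegral x
  have hdeg0 : (minpoly F (x - algebraMap F K z)).natDegree = (minpoly F x).natDegree := by
    rw [minpoly.sub_algebraMap, natDegree_comp, natDegree_X_add_C, mul_one]
  have hmp : minpoly F y = (-1) ^ (minpoly F x).natDegree *
      ((minpoly F x).comp (X + C z)).comp (-X) := by
    rw [hyx, minpoly.neg, hdeg0, minpoly.sub_algebraMap]
  have hdeg : (minpoly F y).natDegree = (minpoly F x).natDegree := by
    rw [hmp, natDegree_mul (pow_ne_zero _ (by simp))]
    · rw [natDegree_comp, natDegree_comp, natDegree_X_add_C, natDegree_neg, natDegree_X,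
        natDegree_pow]; simp
    · intro h
      rw [h, mul_zero] at hmp
      exact minpoly.ne_zero hint hmp
  rw [Algebra.norm_eq_norm_adjoin]
  have h1 := Algebra.PowerBasis.norm_gen_eq_coeff_zero_minpoly
    (IntermediateField.adjoin.powerBasis hint)
  rw [IntermediateField.adjoin.powerBasis_gen, IntermediateField.minpoly_gen,
    IntermediateField.adjoin.powerBasis_dim, hdeg] at h1
  have h2 : (minpoly F y).coeff 0 = (-1) ^ (minpoly F x).natDegree * (minpoly F x).eval z := by
    rw [hmp, coeff_zero_eq_eval_zero]
    simp [eval_comp]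
  rw [h2, ← mul_assoc, ← mul_pow] at h1
  simp only [mul_neg, mul_one, neg_neg, one_pow, one_mul] at h1
  rw [h1]
  congr 1
  have h3 := Module.finrank_mul_finrank F (IntermediateField.adjoin F {y}) K
  rw [IntermediateField.adjoin.finrank hint, hdeg] at h3
  rw [← h3, Nat.mul_div_cancel_left _ (minpoly.natDegree_pos hintx)]

lemma ss_eq {F : Type*} [Field F] [Fintype F] (χ : MulChar F ℂ) (Z : Finset F) (e : F → ℕ)
    (i : ℕ) (hi : 1 ≤ i) (K : Type*) [Field K] [Fintype K] [Algebra F K]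
    (hK : Fintype.card K = Fintype.card F ^ i) :
    ss χ Z e i = ∑ x : K, ∏ z ∈ Z, χ (Algebra.norm F (algebraMap F K z - x)) ^ e z := by
  classical
  have hfr : Module.finrank F K = i := by
    have := Module.card_eq_pow_finrank (K := F) (V := K)
    rw [hK] at this
    exact (Nat.pow_right_injective (Fintype.one_lt_card) this).symm
  have h1 : ∀ x : K, ∏ z ∈ Z, χ (Algebra.norm F (algebraMap F K z - x)) ^ e z =
      lam χ Z e (minpoly F x) ^ (i / (minpoly F x).natDegree) := by
    intro x
    rw [lam, ← Finset.prod_pow]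
    refine Finset.prod_congr rfl fun z _ => ?_
    rw [norm_sub_eq, map_pow, hfr, ← pow_mul, ← pow_mul, mul_comm]
  simp_rw [h1]
  have hmem : ∀ x : K, minpoly F x ∈ irr F (minpoly F x).natDegree := fun x =>
    have hx : IsIntegral F x := Algebra.IsIntegral.isIntegral x
    mem_irr.2 ⟨⟨minpoly.monic hx, rfl⟩, minpoly.irreducible hx⟩
  have hdvd : ∀ x : K, (minpoly F x).natDegree ∣ i := fun x =>
    hfr ▸ minpoly.degree_dvd (Algebra.IsIntegral.isIntegral x)
  rw [← Finset.sum_fiberwise_of_maps_to (s := Finset.univ) (t := Finset.Icc 1 i)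
    (g := fun x : K => (minpoly F x).natDegree)]
  swap
  · intro x _
    rw [Finset.mem_Icc]
    exact ⟨minpoly.natDegree_pos (Algebra.IsIntegral.isIntegral x), Nat.le_of_dvd hi (hdvd x)⟩
  rw [ss]
  refine Finset.sum_congr rfl fun d hd => ?_
  rw [Finset.mem_Icc] at hd
  by_cases hdi : d ∣ i
  · obtain ⟨a, rfl⟩ := hdi
    have ha : 1 ≤ a := by
      rcases Nat.eq_zero_or_pos a with h | h
      · rw [h] at hi; omega
      · exact h
    rw [Finset.sum_eq_single a]
    · rw [if_pos rfl]
      rw [← Finset.sum_fiberwise_of_maps_to (s := Finset.univ.filter fun x : K =>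
        (minpoly F x).natDegree = d) (t := irr F d) (g := fun x : K => minpoly F x)]
      swap
      · intro x hx
        rw [← (Finset.mem_filter.1 hx).2]; exact hmem x
      refine Finset.sum_congr rfl fun P hP => ?_
      obtain ⟨⟨hPm, hPd⟩, hPi⟩ := mem_irr.1 hP
      rw [Finset.sum_congr rfl (g := fun _ => lam χ Z e P ^ a)]
      swap
      · intro x hx
        rw [(Finset.mem_filter.1 hx).2, hPd, Nat.mul_div_cancel_left _ (by omega)]
      rw [Finset.sum_const, nsmul_eq_mul]
      congr 2
      have hsep : P.Separable := PerfectField.separable_of_irreducible hPi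
      have hsplit : (P.map (algebraMap F K)).Splits := by
        have h2 : P ∣ X ^ Nat.card F ^ (d * a) - X :=
          hPi.natDegree_dvd_iff_dvd_X_pow_card_pow_sub_X.1 (by rw [hPd]; exact dvd_mul_right _ _)
        rw [Nat.card_eq_fintype_card, ← hK] at h2
        refine Splits.of_dvd ?_ ?_ (map_dvd (algebraMap F K) h2)
        · exact (FiniteField.isSplittingField_sub K F).splits
        · refine map_ne_zero ?_
          exact FiniteField.X_pow_card_sub_X_ne_zero F Fintype.one_lt_card
      have h3 := card_rootSet_eq_natDegree hsep hsplit
      rw [hPd] at h3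
      rw [← h3, ← Set.toFinset_card]
      congr 1
      ext x
      rw [Set.mem_toFinset, mem_rootSet, Finset.mem_filter, Finset.mem_filter]
      constructor
      · rintro ⟨_, h⟩
        have := minpoly.eq_of_irreducible_of_monic hPi h hPm
        exact ⟨⟨Finset.mem_univ _, by rw [← this, hPd, Set.toFinset_card, h3]⟩, this.symm⟩
      · rintro ⟨_, h⟩
        exact ⟨hPm.ne_zero, by rw [← h]; exact minpoly.aeval F x⟩
    · intro b _ hb
      rw [if_neg]
      intro h
      exact hb (Nat.eq_of_mul_eq_mul_left (by omega) h)
    · intro h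
      exact absurd (Finset.mem_Icc.2 ⟨ha, by nlinarith⟩) h
  · rw [Finset.sum_eq_zero, Finset.sum_eq_zero]
    · intro x hx
      rw [Finset.mem_filter] at hx
      exact absurd (hx.2 ▸ hdvd x) hdi
    · intro a _
      rw [if_neg]
      rintro rfl
      exact hdi (dvd_mul_right _ _)
end

section
open Polynomial
lemma multiset_enum (s : Multiset ℂ) : ∃ f : Fin s.card → ℂ, Finset.univ.val.map f = s := by
  induction s using Quot.inductionOn with
  | h l => exact ⟨l.get, (Fin.univ_val_map l.get).trans (congrArg _ (List.ofFn_get l))⟩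

lemma power_sums (D : ℕ) (c s : ℕ → ℂ) (hc0 : c 0 = 1) (hcD : ∀ k, D < k → c k = 0)
    (hN : ∀ k : ℕ, (k : ℂ) * c k = ∑ i ∈ Finset.Icc 1 k, s i * c (k - i)) :
    ∃ ω : Fin D → ℂ, ∀ k, 1 ≤ k → s k = - ∑ j, ω j ^ k := by
  classical
  set Q : ℂ[X] := ∑ k ∈ Finset.range (D + 1), C (c (D - k)) * X ^ k with hQ
  have hcoeff : ∀ k, Q.coeff k = if k ≤ D then c (D - k) else 0 := by
    intro k
    rw [hQ, finsetSum_coeff]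
    simp only [coeff_C_mul, coeff_X_pow, mul_ite, mul_one, mul_zero, Finset.sum_ite_eq,
      Finset.mem_range, Nat.lt_succ_iff]
  have hdeg : Q.natDegree = D := by
    refine natDegree_eq_of_le_of_coeff_ne_zero ?_ ?_
    · rw [natDegree_le_iff_coeff_eq_zero]
      intro k hk
      rw [hcoeff, if_neg (by omega)]
    · rw [hcoeff, if_pos le_rfl, Nat.sub_self, hc0]; exact one_ne_zero
  have hlead : Q.leadingCoeff = 1 := by
    rw [leadingCoeff, hdeg, hcoeff, if_pos le_rfl, Nat.sub_self, hc0]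
  have hroots : Q.roots.card = Q.natDegree :=
    ((IsAlgClosed.splits Q).natDegree_eq_card_roots).symm
  obtain ⟨f, hf⟩ := multiset_enum Q.roots
  rw [hroots, hdeg] at f
  obtain ⟨ω, hω⟩ : ∃ ω : Fin D → ℂ, Finset.univ.val.map ω = Q.roots := by
    have h := multiset_enum Q.roots
    rwa [hroots, hdeg] at h
  refine ⟨ω, ?_⟩
  set E : ℕ → ℂ := fun k => MvPolynomial.aeval ω (MvPolynomial.esymm (Fin D) ℂ k) with hE
  have hEc : ∀ k, c k = (-1) ^ k * E k := by
    intro k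
    rw [hE]
    simp only
    rw [MvPolynomial.aeval_esymm_eq_multiset_esymm, hω]
    by_cases hk : k ≤ D
    · have h1 := coeff_eq_esymm_roots_of_card hroots (k := D - k) (by omega)
      rw [hlead, hdeg, hcoeff, if_pos (by omega), one_mul, Nat.sub_sub_self hk] at h1
      exact h1
    · rw [hcD k (by omega), Multiset.esymm, Multiset.powersetCard_eq_empty]
      · simp
      · rw [hroots, hdeg]; omega
  have hNE : ∀ k : ℕ, (k : ℂ) * c k = - ∑ i ∈ Finset.Icc 1 k, (∑ j, ω j ^ i) * c (k - i) := by
    intro k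
    have h1 := congrArg (MvPolynomial.aeval ω) (MvPolynomial.mul_esymm_eq_sum (Fin D) ℂ k)
    simp only [map_mul, map_sum, map_pow, map_neg, map_one, map_natCast, MvPolynomial.psum,
      MvPolynomial.aeval_X] at h1
    rw [hEc, mul_left_comm, ← show E k = _ from rfl, h1, ← mul_assoc, ← pow_add,
      show k + (k + 1) = 2 * k + 1 by ring, pow_succ, pow_mul]
    simp only [even_two, Even.neg_pow, one_pow, one_mul, neg_mul, neg_inj]
    refine Finset.sum_bij' (fun a _ => a.2) (fun i _ => (k - i, i)) ?_ ?_ ?_ ?_ ?_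
    · rintro ⟨a, b⟩ h
      simp only [Finset.mem_filter, Finset.HasAntidiagonal.mem_antidiagonal, Finset.mem_Icc] at h ⊢
      omega
    · intro i h
      simp only [Finset.mem_filter, Finset.HasAntidiagonal.mem_antidiagonal, Finset.mem_Icc] at h ⊢
      omega
    · rintro ⟨a, b⟩ h
      simp only [Finset.mem_filter, Finset.HasAntidiagonal.mem_antidiagonal] at h
      simp only [Prod.mk.injEq, and_true]; omega
    · intro i h; rfl
    · rintro ⟨a, b⟩ h
      simp only [Finset.mem_filter, Finset.HasAntidiagonal.mem_antidiagonal] at h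
      have : k - b = a := by omega
      simp only [this, hEc a]
      ring
  intro k
  induction k using Nat.strong_induction_on with
  | _ k ih =>
    intro hk
    have h1 := hN k
    rw [hNE k] at h1
    have hIcc : Finset.Icc 1 k = insert k (Finset.Icc 1 (k - 1)) := by
      ext i; simp only [Finset.mem_insert, Finset.mem_Icc]; omega
    have hk' : k ∉ Finset.Icc 1 (k - 1) := by simp only [Finset.mem_Icc]; omega
    rw [hIcc, Finset.sum_insert hk', Finset.sum_insert hk', Nat.sub_self, hc0] at h1
    have h2 : ∑ i ∈ Finset.Icc 1 (k - 1), s i * c (k - i) =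
        - ∑ i ∈ Finset.Icc 1 (k - 1), (∑ j, ω j ^ i) * c (k - i) := by
      rw [← Finset.sum_neg_distrib]
      refine Finset.sum_congr rfl fun i hi => ?_
      rw [Finset.mem_Icc] at hi
      rw [ih i (by omega) hi.1]; ring
    rw [h2] at h1
    linear_combination -h1

lemma root_bound (D : ℕ) (ω : Fin D → ℂ) (q R : ℝ) (hq : 0 < q) (k₀ : ℕ)
    (h : ∀ k, k₀ ≤ k → ‖∑ j, ω j ^ (2 * k)‖ ≤ R * q ^ k) (j : Fin D) : ‖ω j‖ ≤ √q := by
  by_contra hj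
  rw [not_le, Real.sqrt_lt' (by
    by_contra h0
    have : ‖ω j‖ = 0 := le_antisymm (not_lt.1 h0) (norm_nonneg _)
    rw [this] at hj
    exact absurd hj (not_lt.2 (Real.sqrt_nonneg _)))] at hj
  set u : Fin D → Circle := fun j => Circle.exp (Complex.arg (ω j)) ^ 2 with hu
  have hωu : ∀ j, ω j ^ 2 = ((‖ω j‖ ^ 2 : ℝ) : ℂ) * (u j : ℂ) := by
    intro j
    conv_lhs => rw [← Complex.norm_mul_exp_arg_mul_I (ω j)]
    rw [hu]
    push_cast
    rw [mul_pow]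
  have hfreq : ∃ᶠ k in Filter.atTop, u ^ k ∈ {v : Fin D → Circle | ∀ j, 1 / 2 < (v j : ℂ).re} := by
    have h1 := mapClusterPt_one_atTop_pow u
    refine h1.frequently ?_
    refine IsOpen.mem_nhds ?_ ?_
    · rw [Set.ofPred_forall]
      refine isOpen_iInter_of_finite fun j => ?_
      refine isOpen_lt continuous_const ?_
      exact Complex.continuous_re.comp (continuous_subtype_val.comp (continuous_apply j))
    · intro j; simp; norm_num
  have hev : ∀ᶠ k : ℕ in Filter.atTop, R * q ^ k < 1 / 2 * (‖ω j‖ ^ 2) ^ k := by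
    have h1 : 1 < ‖ω j‖ ^ 2 / q := by rwa [one_lt_div hq]
    filter_upwards [(tendsto_pow_atTop_atTop_of_one_lt h1).eventually_gt_atTop (2 * R)] with k hk
    rw [div_pow, lt_div_iff₀ (by positivity)] at hk
    linarith
  obtain ⟨k, hk1, hk2, hk3⟩ := (hfreq.and_eventually (hev.and (Filter.eventually_ge_atTop k₀))).exists
  have h1 := (Complex.re_le_norm _).trans (h k hk3)
  have h2 : (∑ j, ω j ^ (2 * k)).re = ∑ j, (‖ω j‖ ^ 2) ^ k * ((u ^ k) j : ℂ).re := by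
    rw [Complex.re_sum]
    refine Finset.sum_congr rfl fun j _ => ?_
    rw [pow_mul, hωu, mul_pow, ← Complex.ofReal_pow, Complex.re_ofReal_mul]
    simp
  have h3 : 1 / 2 * (‖ω j‖ ^ 2) ^ k ≤ ∑ j, (‖ω j‖ ^ 2) ^ k * ((u ^ k) j : ℂ).re := by
    have h4 : ∀ j, 0 ≤ (‖ω j‖ ^ 2) ^ k * ((u ^ k) j : ℂ).re := fun j => by
      have := hk1 j
      exact mul_nonneg (by positivity) (by linarith)
    refine le_trans ?_ (Finset.single_le_sum (fun j _ => h4 j) (Finset.mem_univ j))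
    have := hk1 j
    have h5 : 0 ≤ (‖ω j‖ ^ 2) ^ k := by positivity
    nlinarith
  linarith

lemma weil0 {F : Type*} [Field F] [Fintype F] (χ : MulChar F ℂ)
    (hord : orderOf χ = Fintype.card F - 1) (Z : Finset F) (e : F → ℕ)
    (z₀ : F) (hz₀ : z₀ ∈ Z) (he : ¬ (Fintype.card F - 1 ∣ e z₀)) (hZ0 : (0 : F) ∉ Z) :
    ‖∑ x : F, ∏ z ∈ Z, χ (z - x) ^ e z‖ ≤ ((Z.card : ℝ) - 1) * √(Fintype.card F) := by
  classical
  have hZpos : 0 < Z.card := Finset.card_pos.2 ⟨_, hz₀⟩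
  have hq1 : 1 < Fintype.card F := Fintype.one_lt_card
  obtain ⟨ω, hω⟩ := power_sums (Z.card - 1) (cc χ Z e) (ss χ Z e) (cc_zero χ Z e)
    (fun k hk => cc_eq_zero χ hord Z e z₀ hz₀ he k (by omega)) (newton χ Z e)
  obtain ⟨R, M₀, hR⟩ := ext_sum_bound χ hord Z e z₀ hz₀ he hZ0
  obtain ⟨p, hp⟩ := CharP.exists F
  have : Fact p.Prime := ⟨CharP.char_is_prime F p⟩
  have hroot := root_bound (Z.card - 1) ω (Fintype.card F) R (by exact_mod_cast hq1.le) (M₀ + 1) (by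
    intro k hk
    have hk2 : NeZero (2 * k) := ⟨by omega⟩
    have hfin : Fintype (FiniteField.Extension F p (2 * k)) := Fintype.ofFinite _
    have hcard : Fintype.card (FiniteField.Extension F p (2 * k)) = Fintype.card F ^ (2 * k) := by
      rw [← Nat.card_eq_fintype_card, FiniteField.natCard_extension, Nat.card_eq_fintype_card]
    have h1 := hR (FiniteField.Extension F p (2 * k)) k hcard (by
      have := (Nat.lt_pow_self hq1 (n := k)).le
      omega)
    rw [← ss_eq χ Z e (2 * k) (by omega) (FiniteField.Extension F p (2 * k)) hcard,
      hω (2 * k) (by omega), norm_neg] at h1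
    exact h1)
  have h2 := ss_eq χ Z e 1 le_rfl F (by rw [pow_one])
  simp only [Algebra.norm_self, Algebra.algebraMap_self, RingHom.id_apply, MonoidHom.id_apply] at h2
  rw [← h2, hω 1 le_rfl, norm_neg]
  refine (norm_sum_le_of_le _ (f := fun j => ω j ^ 1) (n := fun _ => √(Fintype.card F : ℝ)) (fun j _ => by rw [pow_one]; exact hroot j)).trans ?_
  rw [Finset.sum_const, Finset.card_univ, Fintype.card_fin, nsmul_eq_mul, Nat.cast_sub hZpos]
  simp

lemma weil {F : Type*} [Field F] [Fintype F] (χ : MulChar F ℂ)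
    (hord : orderOf χ = Fintype.card F - 1) (h3 : 3 ≤ Fintype.card F) (Z : Finset F) (e : F → ℕ)
    (z₀ : F) (hz₀ : z₀ ∈ Z) (he : ¬ (Fintype.card F - 1 ∣ e z₀)) :
    ‖∑ x : F, ∏ z ∈ Z, χ (x - z) ^ e z‖ ≤ ((Z.card : ℝ) - 1) * √(Fintype.card F) := by
  classical
  by_cases hZ : Z = Finset.univ
  · have h1 : ‖∑ x : F, ∏ z ∈ Z, χ (x - z) ^ e z‖ ≤ ∑ x : F, (1 : ℝ) := by
      refine norm_sum_le_of_le _ fun x _ => ?_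
      rw [norm_prod]
      refine Finset.prod_le_one (fun _ _ => norm_nonneg _) fun z _ => ?_
      rw [norm_pow]
      exact pow_le_one₀ (norm_nonneg _) (norm_char_le χ _)
    refine h1.trans ?_
    rw [hZ, Finset.card_univ, Finset.sum_const, Finset.card_univ, nsmul_eq_mul, mul_one]
    have hq : (3 : ℝ) ≤ Fintype.card F := by exact_mod_cast h3
    set Q : ℝ := (Fintype.card F : ℝ)
    have h2 : √Q * √Q = Q := Real.mul_self_sqrt (by linarith)
    have h4 : (3 / 2 : ℝ) ≤ √Q := Real.le_sqrt_of_sq_le (by linarith)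
    nlinarith
  · obtain ⟨w, hw⟩ : ∃ w, w ∉ Z := by
      by_contra h
      push Not at h
      exact hZ (Finset.eq_univ_iff_forall.2 h)
    have h1 := weil0 χ hord (Z.image (fun z => z - w)) (fun z => e (z + w)) (z₀ - w)
      (Finset.mem_image_of_mem _ hz₀) (by simpa using he) (by
        rw [Finset.mem_image]
        rintro ⟨z, hz, hzw⟩
        rw [sub_eq_zero] at hzw
        exact hw (hzw ▸ hz))
    rw [Finset.card_image_of_injective _ (fun a b h => sub_left_injective h)] at h1
    refine le_trans (le_of_eq ?_) h1
    have h2 : ∑ x : F, ∏ z ∈ Z.image (fun z => z - w), χ (z - x) ^ e (z + w) =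
        (∏ z ∈ Z, χ (-1) ^ e z) * ∑ x : F, ∏ z ∈ Z, χ (x - z) ^ e z := by
      rw [Finset.mul_sum, ← Equiv.sum_comp (Equiv.subRight w)]
      refine Finset.sum_congr rfl fun x _ => ?_
      rw [Finset.prod_image (fun a _ b _ h => sub_left_injective h), ← Finset.prod_mul_distrib]
      refine Finset.prod_congr rfl fun z _ => ?_
      rw [← mul_pow, ← map_mul]
      simp
    rw [h2, norm_mul, norm_prod]
    have h5 : ‖χ (-1)‖ = 1 := by
      refine Complex.norm_eq_one_of_pow_eq_one (n := 2) ?_ (by norm_num)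
      rw [← map_pow]; simp
    simp [h5]
end

section
lemma exists_hit {ι : Type*} [Fintype ι] [DecidableEq ι] (σ : ι → ι) (hσ : ∀ i, σ i ≠ i) :
    ∃ R : Finset ι, 2 * R.card ≤ Fintype.card ι ∧ ∀ i, ∃ n : ℕ, σ^[n] i ∈ R := by
  classical
  set P : Finset ι → Prop := fun R => (∀ i, ∃ n : ℕ, σ^[n] i ∈ R) ∧
    ∀ i ∈ R, ∃ n : ℕ, σ^[n + 1] i = i with hP
  have hne : (Finset.univ.filter P).Nonempty := by
    refine ⟨Finset.univ.filter (fun i => ∃ n : ℕ, σ^[n + 1] i = i), ?_⟩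
    rw [Finset.mem_filter]
    refine ⟨Finset.mem_univ _, ?_, fun i hi => (Finset.mem_filter.1 hi).2⟩
    intro i
    obtain ⟨n, m, hnm, h⟩ := Finite.exists_ne_map_eq_of_infinite (fun n : ℕ => σ^[n] i)
    have key : ∀ n m : ℕ, n < m → σ^[n] i = σ^[m] i →
        ∃ n : ℕ, σ^[n] i ∈ Finset.univ.filter (fun i => ∃ n : ℕ, σ^[n + 1] i = i) := by
      intro n m hnm h
      refine ⟨n, Finset.mem_filter.2 ⟨Finset.mem_univ _, m - n - 1, ?_⟩⟩
      rw [← Function.iterate_add_apply, h]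
      congr 1
      congr 1
      omega
    rcases lt_or_gt_of_ne hnm with h1 | h1
    · exact key n m h1 h
    · exact key m n h1 h.symm
  obtain ⟨R, hR, hmin⟩ := Finset.exists_min_image _ Finset.card hne
  obtain ⟨hhit, hper⟩ := (Finset.mem_filter.1 hR).2
  have hreach : ∀ i ∈ R, ∀ j ∈ R, (∃ n : ℕ, σ^[n] i = j) → i = j := by
    rintro i hi j hj ⟨n, hn⟩
    by_contra hij
    have h1 : R.erase i ∈ Finset.univ.filter P := by
      rw [Finset.mem_filter]
      refine ⟨Finset.mem_univ _, ?_, fun x hx => hper x (Finset.mem_of_mem_erase hx)⟩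
      intro x
      obtain ⟨m, hm⟩ := hhit x
      by_cases hx : σ^[m] x = i
      · refine ⟨n + m, ?_⟩
        rw [Function.iterate_add_apply, hx, hn]
        exact Finset.mem_erase.2 ⟨Ne.symm hij, hj⟩
      · exact ⟨m, Finset.mem_erase.2 ⟨hx, hm⟩⟩
    have h2 := hmin _ h1
    have h3 := Finset.card_erase_lt_of_mem hi
    omega
  refine ⟨R, ?_, hhit⟩
  have hinj : Set.InjOn σ (R : Set ι) := by
    intro i hi j hj hij
    refine hreach i hi j hj ?_
    obtain ⟨n, hn⟩ := hper j hj
    refine ⟨n + 1, ?_⟩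
    rw [Function.iterate_succ_apply] at hn ⊢
    rw [hij, hn]
  have hdisj : Disjoint R (R.image σ) := by
    rw [Finset.disjoint_left]
    intro i hi hi'
    obtain ⟨j, hj, hji⟩ := Finset.mem_image.1 hi'
    have := hreach j hj i hi ⟨1, by simpa using hji⟩
    rw [← this] at hji
    exact hσ j hji
  have h1 := Finset.card_le_univ (R ∪ R.image σ)
  rw [Finset.card_union_of_disjoint hdisj, Finset.card_image_of_injOn hinj] at h1
  omega

lemma count_one {ι F : Type*} [Fintype ι] [DecidableEq ι] [DecidableEq F] (T : Finset F)
    (hT : T.Nonempty) (A : F → F) (r : ℕ) (hι : Fintype.card ι = 2 * r)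
    (σ : ι → ι) (hσ : ∀ i, σ i ≠ i) (τ : ι → Bool) :
    ((Fintype.piFinset (fun _ : ι => T)).filter
      (fun u => ∀ i, u i = if τ i then A (u (σ i)) else u (σ i))).card ≤ T.card ^ r := by
  classical
  obtain ⟨R, hR, hhit⟩ := exists_hit σ hσ
  have h1 : T.card ^ R.card ≤ T.card ^ r :=
    Nat.pow_le_pow_right (Finset.card_pos.2 hT) (by omega)
  refine le_trans ?_ h1
  have h2 : (Fintype.piFinset (fun _ : R => T)).card = T.card ^ R.card := by
    rw [Fintype.card_piFinset]; simp
  rw [← h2]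
  refine Finset.card_le_card_of_injOn (fun u i => u i) ?_ ?_
  · intro u hu
    have hu := (Finset.mem_filter.1 hu).1
    rw [Fintype.mem_piFinset] at hu
    exact Fintype.mem_piFinset.2 fun i => hu i
  · intro u hu v hv huv
    have hu := (Finset.mem_filter.1 hu).2
    have hv := (Finset.mem_filter.1 hv).2
    have key : ∀ n i, σ^[n] i ∈ R → u i = v i := by
      intro n
      induction n with
      | zero => intro i hi; exact congrFun huv ⟨i, hi⟩
      | succ n ih =>
        intro i hi
        rw [Function.iterate_succ_apply] at hi
        rw [hu i, hv i, ih _ hi]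
    funext i
    obtain ⟨n, hn⟩ := hhit i
    exact key n i hn

lemma count_bad {ι F : Type*} [Fintype ι] [DecidableEq ι] [DecidableEq F] (T : Finset F)
    (hT : T.Nonempty) (A : F → F) (r : ℕ) (hι : Fintype.card ι = 2 * r) :
    ((Fintype.piFinset (fun _ : ι => T)).filter
      (fun u => ∀ i, ∃ j, j ≠ i ∧ (u j = u i ∨ A (u j) = u i))).card ≤
        (4 * r) ^ (2 * r) * T.card ^ r := by
  classical
  set I : Finset ((ι → ι) × (ι → Bool)) := Finset.univ.filter (fun p => ∀ i, p.1 i ≠ i) with hI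
  have hsub : ((Fintype.piFinset (fun _ : ι => T)).filter
      (fun u => ∀ i, ∃ j, j ≠ i ∧ (u j = u i ∨ A (u j) = u i))) ⊆
      I.biUnion (fun p => (Fintype.piFinset (fun _ : ι => T)).filter
      (fun u => ∀ i, u i = if p.2 i then A (u (p.1 i)) else u (p.1 i))) := by
    intro u hu
    rw [Finset.mem_filter] at hu
    obtain ⟨hu1, hu2⟩ := hu
    choose σ hσ hσu using hu2
    rw [Finset.mem_biUnion]
    refine ⟨(σ, fun i => decide (A (u (σ i)) = u i)),
      Finset.mem_filter.2 ⟨Finset.mem_univ _, hσ⟩, Finset.mem_filter.2 ⟨hu1, fun i => ?_⟩⟩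
    by_cases h : A (u (σ i)) = u i
    · simp [h]
    · rw [if_neg (by simpa using h)]; exact ((hσu i).resolve_right h).symm
  have h1 : I.card ≤ (4 * r) ^ (2 * r) := by
    refine (Finset.card_le_univ I).trans ?_
    rw [Fintype.card_prod, Fintype.card_fun, Fintype.card_fun, hι, Fintype.card_bool, ← mul_pow]
    exact le_of_eq (by ring)
  refine (Finset.card_le_card hsub).trans ?_
  refine (Finset.card_biUnion_le_card_mul _ _ (T.card ^ r) ?_).trans (Nat.mul_le_mul_right _ h1)
  intro p hp
  exact count_one T hT A r hι p.1 (Finset.mem_filter.1 hp).2 p.2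

lemma good_bound {F ι : Type*} [Field F] [Fintype F] [Fintype ι] (χ : MulChar F ℂ)
    (hord : orderOf χ = Fintype.card F - 1) (h3 : 3 ≤ Fintype.card F) (a b : ι → ℕ) (u v : ι → F)
    (i₀ : ι) (hu : ∀ j, j ≠ i₀ → u j ≠ u i₀) (hv : ∀ j, v j ≠ u i₀)
    (he : ¬ (Fintype.card F - 1 ∣ a i₀)) :
    ‖∑ s : F, ∏ i, (χ (s + u i) ^ a i * χ (s + v i) ^ b i)‖ ≤
      (2 * (Fintype.card ι : ℝ) - 1) * √(Fintype.card F) := by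
  classical
  set Z : Finset F := Finset.univ.image (fun i => - u i) ∪ Finset.univ.image (fun i => - v i) with hZ
  set e : F → ℕ := fun z => ∑ i ∈ Finset.univ.filter (fun i => - u i = z), a i +
    ∑ i ∈ Finset.univ.filter (fun i => - v i = z), b i with hedef
  have hz₀ : - u i₀ ∈ Z := Finset.mem_union_left _ (Finset.mem_image_of_mem _ (Finset.mem_univ _))
  have hez : e (- u i₀) = a i₀ := by
    rw [hedef]
    simp only
    have h1 : Finset.univ.filter (fun i => - u i = - u i₀) = {i₀} := by
      ext i
      simp only [Finset.mem_filter, Finset.mem_univ, true_and, Finset.mem_singleton, neg_inj]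
      constructor
      · intro h; by_contra hi; exact hu i hi h
      · rintro rfl; rfl
    have h2 : Finset.univ.filter (fun i => - v i = - u i₀) = ∅ := by
      ext i
      simp only [Finset.mem_filter, Finset.mem_univ, true_and, neg_inj, Finset.notMem_empty,
        iff_false]
      exact hv i
    rw [h1, h2]; simp
  have h1 := weil χ hord h3 Z e (- u i₀) hz₀ (by rwa [hez])
  have h2 : ∀ s : F, ∏ z ∈ Z, χ (s - z) ^ e z = ∏ i, (χ (s + u i) ^ a i * χ (s + v i) ^ b i) := by
    intro s
    rw [Finset.prod_mul_distrib,
      ← Finset.prod_fiberwise_of_maps_to (s := Finset.univ) (t := Z) (g := fun i => - u i)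
        (fun i _ => Finset.mem_union_left _ (Finset.mem_image_of_mem _ (Finset.mem_univ _))),
      ← Finset.prod_fiberwise_of_maps_to (s := Finset.univ) (t := Z) (g := fun i => - v i)
        (fun i _ => Finset.mem_union_right _ (Finset.mem_image_of_mem _ (Finset.mem_univ _))),
      ← Finset.prod_mul_distrib]
    refine Finset.prod_congr rfl fun z _ => ?_
    rw [hedef]
    simp only
    rw [pow_add, ← Finset.prod_pow_eq_pow_sum, ← Finset.prod_pow_eq_pow_sum]
    congr 1
    · refine Finset.prod_congr rfl fun i hi => ?_
      rw [← (Finset.mem_filter.1 hi).2, sub_neg_eq_add]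
    · refine Finset.prod_congr rfl fun i hi => ?_
      rw [← (Finset.mem_filter.1 hi).2, sub_neg_eq_add]
  simp_rw [h2] at h1
  refine h1.trans (mul_le_mul_of_nonneg_right ?_ (Real.sqrt_nonneg _))
  have h4 : Z.card ≤ 2 * Fintype.card ι := by
    refine (Finset.card_union_le _ _).trans ?_
    have h5 := Finset.card_image_le (s := Finset.univ) (f := fun i => - u i)
    have h6 := Finset.card_image_le (s := Finset.univ) (f := fun i => - v i)
    rw [Finset.card_univ] at h5 h6
    omega
  have h5 : (Z.card : ℝ) ≤ 2 * Fintype.card ι := by exact_mod_cast h4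
  linarith

lemma conj_char {F : Type*} [Field F] [Fintype F] (h3 : 3 ≤ Fintype.card F) (χ : MulChar F ℂ)
    (x : F) (n : ℕ) :
    (starRingEnd ℂ) (χ x ^ n) = χ x ^ (n * (Fintype.card F - 2)) := by
  by_cases hx : x = 0
  · subst hx
    rw [MulChar.map_zero]
    rcases Nat.eq_zero_or_pos n with h | h
    · simp [h]
    · rw [zero_pow h.ne', zero_pow (Nat.mul_pos h (by omega)).ne', map_zero]
  · have h1 : χ x ^ (Fintype.card F - 1) = 1 := by
      rw [← map_pow, FiniteField.pow_card_sub_one_eq_one x hx, map_one]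
    have hn : ‖χ x‖ = 1 := Complex.norm_eq_one_of_pow_eq_one h1 (by omega)
    have h2 : χ x ^ (Fintype.card F - 2) = (starRingEnd ℂ) (χ x) := by
      rw [← Complex.inv_eq_conj hn]
      refine eq_inv_of_mul_eq_one_left ?_
      rw [← pow_succ, ← h1]
      congr 1; omega
    rw [mul_comm, pow_mul, h2, map_pow]

lemma moment {F : Type*} [Field F] [Fintype F]
    (χ : MulChar F ℂ) (hord : orderOf χ = Fintype.card F - 1)
    (a b : ℕ) (ha : 0 < a) (ha' : a < Fintype.card F - 1)
    (T : Finset F) (hT : T.Nonempty)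
    (A : F → F) (hA : ∀ y, A y ≠ y) (r : ℕ) (hr : 0 < r) (c : F → ℂ) (hc : ∀ y, ‖c y‖ ≤ 1) :
    ∑ s : F, ‖∑ y ∈ T, c y * (χ (s + y) ^ a * χ (s + A y) ^ b)‖ ^ (2 * r) ≤
      (T.card : ℝ) ^ (2 * r) * ((4 * r - 1) * √(Fintype.card F)) +
      ((4 * r) ^ (2 * r) * T.card ^ r : ℕ) * (Fintype.card F : ℝ) := by
  classical
  set q := Fintype.card F with hq
  have h3 : 3 ≤ q := by omega
  set α : Fin r ⊕ Fin r → ℕ := Sum.elim (fun _ => a) (fun _ => a * (q - 2)) with hα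
  set β : Fin r ⊕ Fin r → ℕ := Sum.elim (fun _ => b) (fun _ => b * (q - 2)) with hβ
  set γ : Fin r ⊕ Fin r → F → ℂ := Sum.elim (fun _ => c) (fun _ y => (starRingEnd ℂ) (c y)) with hγ
  have hα' : ∀ i, ¬ (q - 1 ∣ α i) := by
    have h0 : ¬ (q - 1 ∣ a) := fun h => by
      have := Nat.le_of_dvd ha h; omega
    rintro (i | i)
    · exact h0
    · intro h
      have h1 : a * (q - 2) + a = a * (q - 1) := by
        rw [show q - 1 = (q - 2) + 1 by omega]; ring
      have h2 : q - 1 ∣ a * (q - 2) + a := h1 ▸ dvd_mul_left _ _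
      exact h0 ((Nat.dvd_add_right h).1 h2)
  have hγ' : ∀ i y, ‖γ i y‖ ≤ 1 := by
    rintro (i | i) y
    · exact hc y
    · rw [hγ]; simpa using hc y
  have hexp : ∀ s : F, (((‖∑ y ∈ T, c y * (χ (s + y) ^ a * χ (s + A y) ^ b)‖ ^ (2 * r) : ℝ)) : ℂ) =
      ∑ u ∈ Fintype.piFinset (fun _ : Fin r ⊕ Fin r => T), (∏ i, γ i (u i)) *
        ∏ i, (χ (s + u i) ^ α i * χ (s + A (u i)) ^ β i) := by
    intro s
    set G := ∑ y ∈ T, c y * (χ (s + y) ^ a * χ (s + A y) ^ b) with hG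
    have h1 : ((‖G‖ ^ (2 * r) : ℝ) : ℂ) = G ^ r * (starRingEnd ℂ) G ^ r := by
      rw [← mul_pow, Complex.mul_conj, Complex.normSq_eq_norm_sq, pow_mul]; push_cast; rfl
    have h2 : ∏ i : Fin r ⊕ Fin r, ∑ y ∈ T, γ i y * (χ (s + y) ^ α i * χ (s + A y) ^ β i) =
        G ^ r * (starRingEnd ℂ) G ^ r := by
      rw [Fintype.prod_sum_type]
      simp only [hγ, hα, hβ, Sum.elim_inl, Sum.elim_inr, Finset.prod_const, Finset.card_univ,
        Fintype.card_fin]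
      rw [hG, map_sum]
      simp only [map_mul, conj_char h3 χ, ← hq]
    rw [h1, ← h2, Finset.prod_univ_sum]
    refine Finset.sum_congr rfl fun u _ => ?_
    rw [Finset.prod_mul_distrib]
  have hlhs : ∑ s : F, ‖∑ y ∈ T, c y * (χ (s + y) ^ a * χ (s + A y) ^ b)‖ ^ (2 * r) =
      ‖∑ u ∈ Fintype.piFinset (fun _ : Fin r ⊕ Fin r => T), (∏ i, γ i (u i)) *
        ∑ s : F, ∏ i, (χ (s + u i) ^ α i * χ (s + A (u i)) ^ β i)‖ := by
    have h1 : ∑ u ∈ Fintype.piFinset (fun _ : Fin r ⊕ Fin r => T), (∏ i, γ i (u i)) *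
        ∑ s : F, ∏ i, (χ (s + u i) ^ α i * χ (s + A (u i)) ^ β i) =
        ((∑ s : F, ‖∑ y ∈ T, c y * (χ (s + y) ^ a * χ (s + A y) ^ b)‖ ^ (2 * r) : ℝ) : ℂ) := by
      rw [Complex.ofReal_sum]
      simp_rw [hexp, Finset.mul_sum]
      rw [Finset.sum_comm]
    rw [h1, Complex.norm_real, Real.norm_of_nonneg]
    exact Finset.sum_nonneg fun s _ => by positivity
  have hcard : Fintype.card (Fin r ⊕ Fin r) = 2 * r := by simp; ring
  rw [hlhs]
  set bad : (Fin r ⊕ Fin r → F) → Prop := fun u => ∀ i, ∃ j, j ≠ i ∧ (u j = u i ∨ A (u j) = u i)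
    with hbad
  have hterm : ∀ u ∈ Fintype.piFinset (fun _ : Fin r ⊕ Fin r => T),
      ‖(∏ i, γ i (u i)) * ∑ s : F, ∏ i, (χ (s + u i) ^ α i * χ (s + A (u i)) ^ β i)‖ ≤
        (4 * r - 1) * √(q : ℝ) + if bad u then (q : ℝ) else 0 := by
    intro u _
    have h4r : (1 : ℝ) ≤ r := by exact_mod_cast hr
    have hpos : 0 ≤ (4 * (r : ℝ) - 1) * √(q : ℝ) := mul_nonneg (by linarith) (Real.sqrt_nonneg _)
    rw [norm_mul]
    have h1 : ‖∏ i, γ i (u i)‖ ≤ 1 := by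
      rw [norm_prod]
      exact Finset.prod_le_one (fun _ _ => norm_nonneg _) fun i _ => hγ' _ _
    refine (mul_le_of_le_one_left (norm_nonneg _) h1).trans ?_
    by_cases hb : bad u
    · rw [if_pos hb]
      have h2 : ‖∑ s : F, ∏ i, (χ (s + u i) ^ α i * χ (s + A (u i)) ^ β i)‖ ≤ ∑ s : F, (1 : ℝ) := by
        refine norm_sum_le_of_le _ fun s _ => ?_
        rw [norm_prod]
        refine Finset.prod_le_one (fun _ _ => norm_nonneg _) fun i _ => ?_
        rw [norm_mul, norm_pow, norm_pow]
        exact mul_le_one₀ (pow_le_one₀ (norm_nonneg _) (norm_char_le χ _)) (by positivity)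
          (pow_le_one₀ (norm_nonneg _) (norm_char_le χ _))
      rw [Finset.sum_const, Finset.card_univ, nsmul_eq_mul, mul_one] at h2
      linarith
    · rw [if_neg hb, add_zero]
      rw [hbad] at hb
      push Not at hb
      obtain ⟨i₀, hi₀⟩ := hb
      have h2 := good_bound χ hord h3 α β u (fun i => A (u i)) i₀ (fun j hj => (hi₀ j hj).1)
        (fun j => by
          by_cases hj : j = i₀
          · rw [hj]; exact hA _
          · exact (hi₀ j hj).2) (hα' i₀)
      rw [hcard] at h2
      push_cast at h2
      rwa [show (2 * (2 * (r : ℝ)) - 1) = 4 * r - 1 by ring] at h2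
  refine (norm_sum_le_of_le _ hterm).trans ?_
  rw [Finset.sum_add_distrib, Finset.sum_const, ← Finset.sum_filter, Finset.sum_const,
    nsmul_eq_mul, nsmul_eq_mul]
  have hpc : (Fintype.piFinset (fun _ : Fin r ⊕ Fin r => T)).card = T.card ^ (2 * r) := by
    rw [Fintype.card_piFinset, Finset.prod_const, Finset.card_univ, hcard]
  rw [hpc]
  have hb := count_bad T hT A r hcard
  refine add_le_add (le_of_eq (by push_cast; rfl)) ?_
  refine mul_le_mul_of_nonneg_right ?_ (Nat.cast_nonneg _)
  exact_mod_cast hb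

theorem final {F : Type*} [Field F] [Fintype F]
    (χ : MulChar F ℂ) (hord : orderOf χ = Fintype.card F - 1)
    (a b : ℕ) (ha : 0 < a) (ha' : a < Fintype.card F - 1)
    (S T : Finset F) (hS : S.Nonempty) (hT : T.Nonempty)
    (A : F → F) (hA : ∀ y, A y ≠ y) (r : ℕ) (hr : 1 ≤ r)
    (η : ℝ) (hη : 0 < η)
    (hTcard : (2 * (r : ℝ)) ^ 4 * (Fintype.card F : ℝ) ^ (1 / (r : ℝ)) ≤ (T.card : ℝ))
    (hScard : 4 * (r : ℝ) * (Fintype.card F : ℝ) ^ ((1 : ℝ)/2) / η ^ (2 * r) ≤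
      (S.card : ℝ)) :
    ∑ y ∈ T, ‖∑ s ∈ S, (χ (s + y)) ^ a * (χ (s + A y)) ^ b‖ <
      η * (T.card : ℝ) * (S.card : ℝ) := by
  classical
  set q := Fintype.card F with hq
  have h3 : 3 ≤ q := by omega
  have hqR : (3 : ℝ) ≤ q := by exact_mod_cast h3
  have hTpos : (0 : ℝ) < T.card := by exact_mod_cast Finset.card_pos.2 hT
  have hSpos : (0 : ℝ) < S.card := by exact_mod_cast Finset.card_pos.2 hS
  have hrR : (1 : ℝ) ≤ r := by exact_mod_cast hr
  set f : F → F → ℂ := fun y s => χ (s + y) ^ a * χ (s + A y) ^ b with hf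
  set Sy : F → ℂ := fun y => ∑ s ∈ S, f y s with hSy
  set c : F → ℂ := fun y => (starRingEnd ℂ) (Sy y) / ‖Sy y‖ with hc
  have hc1 : ∀ y, ‖c y‖ ≤ 1 := by
    intro y
    rw [hc]
    simp only [norm_div, RCLike.norm_conj, Complex.norm_real, norm_norm]
    exact div_self_le_one _
  have hcS : ∀ y, c y * Sy y = (‖Sy y‖ : ℂ) := by
    intro y
    by_cases h0 : Sy y = 0
    · simp [h0]
    · have : (‖Sy y‖ : ℂ) ≠ 0 := by simpa using h0
      rw [hc]
      simp only
      rw [div_mul_eq_mul_div, mul_comm, Complex.mul_conj, Complex.normSq_eq_norm_sq]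
      field_simp
      push_cast
      ring
  set G : F → ℂ := fun s => ∑ y ∈ T, c y * f y s with hG
  set x : ℝ := ∑ y ∈ T, ‖Sy y‖ with hx
  have hx0 : 0 ≤ x := Finset.sum_nonneg fun _ _ => norm_nonneg _
  have hxG : x ≤ ∑ s ∈ S, ‖G s‖ := by
    have h1 : (x : ℂ) = ∑ s ∈ S, G s := by
      rw [hx, Complex.ofReal_sum, hG, Finset.sum_comm]
      refine Finset.sum_congr rfl fun y _ => ?_
      rw [← hcS, hSy, Finset.mul_sum]
    calc x = ‖(x : ℂ)‖ := by rw [Complex.norm_real, Real.norm_of_nonneg hx0]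
      _ = ‖∑ s ∈ S, G s‖ := by rw [h1]
      _ ≤ _ := norm_sum_le _ _
  set W := ∑ s : F, ‖G s‖ ^ (2 * r) with hW
  have hWle := moment χ hord a b ha ha' T hT A hA r hr c hc1
  rw [← hq] at hWle
  change W ≤ _ at hWle
  have hT1 : (2 * (r : ℝ)) ^ (4 * r) * q ≤ (T.card : ℝ) ^ r := by
    have h1 := pow_le_pow_left₀ (by positivity) hTcard r
    rw [mul_pow, ← pow_mul, ← Real.rpow_natCast ((q : ℝ) ^ (1 / (r : ℝ))) r, ← Real.rpow_mul (by positivity),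
      one_div, inv_mul_cancel₀ (by positivity), Real.rpow_one] at h1
    exact h1
  have hsq : (1 : ℝ) < √q := by
    rw [Real.lt_sqrt (by norm_num)]; linarith
  have hbadle : (((4 * r) ^ (2 * r) * T.card ^ r : ℕ) : ℝ) * q ≤ (T.card : ℝ) ^ (2 * r) := by
    push_cast
    have h1 : (4 * (r : ℝ)) ^ (2 * r) ≤ (2 * (r : ℝ)) ^ (4 * r) := by
      rw [show 4 * r = 2 * (2 * r) by ring, pow_mul (2 * (r : ℝ)) 2]
      refine pow_le_pow_left₀ (by positivity) ?_ _
      nlinarith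
    calc (4 * (r : ℝ)) ^ (2 * r) * (T.card : ℝ) ^ r * q
        ≤ (2 * (r : ℝ)) ^ (4 * r) * (T.card : ℝ) ^ r * q := by gcongr
      _ = ((2 * (r : ℝ)) ^ (4 * r) * q) * (T.card : ℝ) ^ r := by ring
      _ ≤ (T.card : ℝ) ^ r * (T.card : ℝ) ^ r := by gcongr
      _ = _ := by rw [← pow_add]; congr 1; ring
  have hT2 : (0 : ℝ) < (T.card : ℝ) ^ (2 * r) := by positivity
  have hWlt : W < (T.card : ℝ) ^ (2 * r) * (4 * r * √q) := by
    nlinarith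
  have hSη : 4 * (r : ℝ) * √q ≤ S.card * η ^ (2 * r) := by
    rw [Real.sqrt_eq_rpow]
    rwa [div_le_iff₀ (by positivity)] at hScard
  have hpow : x ^ (2 * r) ≤ (S.card : ℝ) ^ (2 * r - 1) * W := by
    obtain ⟨m, hm⟩ : ∃ m, 2 * r = m + 1 := ⟨2 * r - 1, by omega⟩
    have h1 := pow_sum_div_card_le_sum_pow (s := S) (f := fun s => ‖G s‖)
      (fun s _ => norm_nonneg _) m
    rw [div_le_iff₀ (by positivity), ← hm] at h1
    have h2 : ∑ s ∈ S, ‖G s‖ ^ (2 * r) ≤ W :=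
      Finset.sum_le_sum_of_subset_of_nonneg (Finset.subset_univ _) (fun s _ _ => by positivity)
    calc x ^ (2 * r) ≤ (∑ s ∈ S, ‖G s‖) ^ (2 * r) := by gcongr
      _ ≤ _ := h1
      _ ≤ W * (S.card : ℝ) ^ m := by gcongr
      _ = _ := by rw [show 2 * r - 1 = m by omega, mul_comm]
  have hlt : x ^ (2 * r) < (η * T.card * S.card) ^ (2 * r) := by
    calc x ^ (2 * r) ≤ (S.card : ℝ) ^ (2 * r - 1) * W := hpow
      _ < (S.card : ℝ) ^ (2 * r - 1) * ((T.card : ℝ) ^ (2 * r) * (4 * r * √q)) := by gcongr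
      _ ≤ (S.card : ℝ) ^ (2 * r - 1) * ((T.card : ℝ) ^ (2 * r) * (S.card * η ^ (2 * r))) := by gcongr
      _ = (η * T.card * S.card) ^ (2 * r) := by
        obtain ⟨m, hm⟩ : ∃ m, 2 * r = m + 1 := ⟨2 * r - 1, by omega⟩
        rw [hm, Nat.add_sub_cancel, mul_pow, mul_pow, pow_succ (S.card : ℝ)]
        ring
  exact lt_of_pow_lt_pow_left₀ _ (by positivity) hlt
end

end Helpers

open Finset

/-- Under the hypotheses of the parameterized double character sum theorem,
for any η with 0 < η ≤ 1, the bound ∑_{y∈T} |∑_{s∈S} χ_a(s+y)·χ_b(s+A(y))| < η·|T|·|S|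
holds whenever |T| ≥ (2r)⁴·q^{1/r} and |S| ≥ 4r·q^{1/2}/η^{2r}. -/
theorem stmt_12 {F : Type*} [Field F] [Fintype F]
    (χ : MulChar F ℂ) (hord : orderOf χ = Fintype.card F - 1)
    (a b : ℕ) (ha : 0 < a) (ha' : a < Fintype.card F - 1) (hb : b < Fintype.card F - 1)
    (S T : Finset F) (hS : S.Nonempty) (hT : T.Nonempty)
    (A : F → F) (hA : ∀ y, A y ≠ y) (r : ℕ) (hr : 1 ≤ r)
    (η : ℝ) (hη : 0 < η) (hη1 : η ≤ 1)
    (hTcard : (2 * (r : ℝ)) ^ 4 * (Fintype.card F : ℝ) ^ (1 / (r : ℝ)) ≤ (T.card : ℝ))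
    (hScard : 4 * (r : ℝ) * (Fintype.card F : ℝ) ^ ((1 : ℝ)/2) / η ^ (2 * r) ≤
      (S.card : ℝ)) :
    ∑ y ∈ T, ‖∑ s ∈ S, (χ (s + y)) ^ a * (χ (s + A y)) ^ b‖ <
      η * (T.card : ℝ) * (S.card : ℝ) := by
  exact final χ hord a b ha ha' S T hS hT A hA r hr η hη hTcard hScard
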